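/- arXiv:2506.16397 — 10 statements merged into one kernel-verified Lean document; each statement's English description precedes it below -/
import Mathlib

section
/- Let F be a field, β ∈ F, and n ≥ 1. For each nonempty subset T ⊆ {1,…,n} let L_T(z) = Σ_{i∈T} z_i. Then in the polynomial ∏_{∅≠T⊆{1,…,n}} (L_T(z) − β) ∈ F[z_1,…,z_n], the coefficient of the monomial ∏_{i=1}^n z_i^{2^{i−1}} equals 1 (in particular this coefficient is nonzero over fields of every characteristic). -/
/-!
Order the monomials colexicographically, so that `z_i ≺ z_j` whenever `i < j`. The factor attached
to `T` is then monic with leading monomial `z_{max T}`, whatever its constant term. The leading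
monomial of the product is therefore `∏_T z_{max T}`, with coefficient `1`, and `z_i` occurs in it
once for each subset of `{j | j < i}`, that is `2 ^ #{j | j < i}` times.
-/

open Finset MonomialOrder MvPolynomial

theorem card_filter_max_eq {ι : Type*} [LinearOrder ι] [Fintype ι] [LocallyFiniteOrderBot ι]
    (i : ι) : #{T : Finset ι | T.max = i} = 2 ^ #(Iio i) := by
  rw [← card_powerset]
  refine card_nbij' (fun T ↦ T.erase i) (insert i) ?mapsErase ?mapsInsert ?insertErase ?eraseInsert
  case mapsErase =>
    intro T hT
    have hmax : T.max = i := by simpa using hT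
    refine mem_coe.2 (mem_powerset.2 fun j hj ↦ mem_Iio.2 ?_)
    exact lt_of_le_of_ne (le_max_of_eq (mem_of_mem_erase hj) hmax) (ne_of_mem_erase hj)
  case mapsInsert =>
    intro S hS
    have hlt : S ⊆ Iio i := mem_powerset.1 (mem_coe.1 hS)
    have hle : S.max ≤ i := Finset.max_le fun j hj ↦
      WithBot.coe_le_coe.2 (mem_Iio.1 (hlt hj)).le
    simpa [max_insert] using hle
  case insertErase =>
    intro T hT
    exact insert_erase (mem_of_max (by simpa using hT))
  case eraseInsert =>
    intro S hS
    have hlt : S ⊆ Iio i := mem_powerset.1 (mem_coe.1 hS)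
    exact erase_insert fun hi ↦ lt_irrefl i (mem_Iio.1 (hlt hi))

/-- The colexicographic monomial order: exponent vectors are compared at the largest index where
they differ, so that larger variables dominate. Mathlib's `MonomialOrder.lex` makes smaller
variables dominate instead. -/
noncomputable def colexMonomialOrder (ι : Type*) [LinearOrder ι] [WellFoundedLT ι] :
    MonomialOrder ι where
  syn := Colex (ι →₀ ℕ)
  toSyn := { toEquiv := toColex, map_add' := toColex_add }
  toSyn_monotone := Finsupp.toColex_monotone

theorem colexMonomialOrder_single_strictMono {ι : Type*} [LinearOrder ι] [WellFoundedLT ι] :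
    StrictMono fun i : ι ↦ (colexMonomialOrder ι).toSyn (Finsupp.single i 1) :=
  Finsupp.Colex.single_strictMono

section AffineForm

variable {ι R : Type*} [CommSemiring R] {m : MonomialOrder ι}

theorem degree_sum_X_add_C_lt {S : Finset ι} {i : ι}
    (hS : ∀ j ∈ S, Finsupp.single j 1 ≺[m] Finsupp.single i 1) (b : R) :
    m.degree (∑ j ∈ S, X j + C b) ≺[m] Finsupp.single i 1 := by
  have hpos : (⊥ : m.syn) < m.toSyn (Finsupp.single i 1) :=
    m.toSyn_lt_iff_ne_zero.2 (by simp)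
  refine m.degree_add_le.trans_lt (max_lt ?_ ?_)
  · exact m.degree_sum_le.trans_lt
      ((Finset.sup_lt_iff hpos).2 fun j hj ↦ m.degree_X_le_single.trans_lt (hS j hj))
  · simpa using hpos

variable [LinearOrder ι] {T : Finset ι} {i : ι}

theorem exists_sum_X_add_C_eq_X_add
    (hm : StrictMono fun j : ι ↦ m.toSyn (Finsupp.single j 1)) (hT : T.max = i) (b : R) :
    ∃ q : MvPolynomial ι R, ∑ j ∈ T, X j + C b = X i + q ∧
      m.degree q ≺[m] Finsupp.single i 1 := by
  refine ⟨∑ j ∈ T.erase i, X j + C b, ?_, degree_sum_X_add_C_lt (fun j hj ↦ hm ?_) b⟩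
  · rw [← add_sum_erase T _ (mem_of_max hT), add_assoc]
  · exact lt_of_le_of_ne (le_max_of_eq (mem_of_mem_erase hj) hT) (ne_of_mem_erase hj)

theorem degree_sum_X_add_C [Nontrivial R]
    (hm : StrictMono fun j : ι ↦ m.toSyn (Finsupp.single j 1)) (hT : T.max = i) (b : R) :
    m.degree (∑ j ∈ T, X j + C b) = Finsupp.single i 1 := by
  obtain ⟨q, hq, hlt⟩ := exists_sum_X_add_C_eq_X_add hm hT b
  rw [hq, m.degree_add_of_lt (by rwa [degree_X]), degree_X]

theorem monic_sum_X_add_C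
    (hm : StrictMono fun j : ι ↦ m.toSyn (Finsupp.single j 1)) (hT : T.max = i) (b : R) :
    m.Monic (∑ j ∈ T, X j + C b) := by
  nontriviality R
  obtain ⟨q, hq, hlt⟩ := exists_sum_X_add_C_eq_X_add hm hT b
  rw [hq]
  exact m.monic_X.add_of_lt (by rwa [degree_X])

end AffineForm

theorem sum_degree_sum_X_add_C {ι R : Type*} [LinearOrder ι] [Fintype ι]
    [LocallyFiniteOrderBot ι] [CommSemiring R] [Nontrivial R] {m : MonomialOrder ι}
    (hm : StrictMono fun j : ι ↦ m.toSyn (Finsupp.single j 1)) (b : Finset ι → R) :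
    ∑ T with T.Nonempty, m.degree (∑ j ∈ T, X j + C (b T)) =
      Finsupp.equivFunOnFinite.symm fun i ↦ 2 ^ #(Iio i) := by
  ext i
  have hdegree : ∀ T ∈ ({T | T.Nonempty} : Finset (Finset ι)),
      m.degree (∑ j ∈ T, X j + C (b T)) i = if T.max = i then 1 else 0 := by
    intro T hT
    obtain ⟨k, hk⟩ := max_of_nonempty (mem_filter.1 hT).2
    simp only [degree_sum_X_add_C hm hk, hk, Finsupp.single_apply, WithBot.coe_inj]
  have hnonempty : ∀ T : Finset ι, T.max = i → T.Nonempty := fun T hT ↦ ⟨i, mem_of_max hT⟩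
  calc (∑ T with T.Nonempty, m.degree (∑ j ∈ T, X j + C (b T))) i
      = ∑ T : Finset ι with T.Nonempty, if T.max = i then 1 else 0 := by
        rw [Finsupp.finsetSum_apply, sum_congr rfl hdegree]
    _ = #{T : Finset ι | T.max = i} := by
        rw [← card_filter, filter_filter]
        exact congrArg card (filter_congr fun T _ ↦ and_iff_right_of_imp (hnonempty T))
    _ = 2 ^ #(Iio i) := card_filter_max_eq i

theorem coeff_of_product_over_nonempty_subsets_general {ι R : Type*} [LinearOrder ι] [Fintype ι]
    [LocallyFiniteOrderBot ι] [CommSemiring R] (b : Finset ι → R) :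
    coeff (Finsupp.equivFunOnFinite.symm fun i ↦ 2 ^ #(Iio i))
      (∏ T with T.Nonempty, (∑ i ∈ T, X i + C (b T))) = 1 := by
  nontriviality R
  have hm := colexMonomialOrder_single_strictMono (ι := ι)
  rw [← sum_degree_sum_X_add_C hm b, coeff_prod_sum_degree]
  refine prod_eq_one fun T hT ↦ ?_
  obtain ⟨i, hi⟩ := max_of_nonempty (mem_filter.1 hT).2
  exact (monic_sum_X_add_C hm hi (b T)).leadingCoeff_eq_one


/-- For any field `F`, `β ∈ F` and `n ≥ 1`, in the polynomial
`∏_{∅ ≠ T ⊆ [n]} ((∑_{i ∈ T} z_i) - β)` the coefficient of the monomial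
`∏_{i=1}^n z_i^{2^{i-1}}` equals `1`. -/
theorem coeff_of_product_over_nonempty_subsets
    (F : Type*) [Field F] (n : ℕ) (hn : 1 ≤ n) (β : F) :
    MvPolynomial.coeff
      (Finsupp.equivFunOnFinite.symm fun i : Fin n => 2 ^ (i : ℕ))
      (∏ T ∈ Finset.univ.powerset.filter Finset.Nonempty,
        ((∑ i ∈ T, MvPolynomial.X i) - MvPolynomial.C β : MvPolynomial (Fin n) F)) = 1 := by
  simpa [sub_eq_add_neg] using
    coeff_of_product_over_nonempty_subsets_general fun _ : Finset (Fin n) ↦ -β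
end

section
/- Let F′ be a field and F a strict subfield of F′, let n ∈ ℕ, fix β ∈ F′ \ F, and let S ⊆ F be a finite nonempty subset. For each α = (α_1,…,α_n) ∈ F^n one has Σ_i α_i a_i − β ≠ 0 for every a ∈ {0,1}^n; let f_α ∈ F′[x_1,…,x_n] denote the unique multilinear polynomial that agrees with the function 1/(Σ_i α_i x_i − β) on the Boolean cube {0,1}^n. Then the number of tuples α ∈ S^n for which the total degree of f_α is strictly less than n is at most (2^n − 1)·|S|^{n−1}. Equivalently, for α drawn uniformly at random from S^n, Pr[deg f_α = n] ≥ 1 − (2^n − 1)/|S|. -/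
/-!
Write `L b = ∑ i ∈ b, X i - β` for `b ⊆ {1, …, n}`. If `p` agrees with `1 / (∑ i, α i * x i - β)`
on the cube, then its value at the indicator vector of `b` is `1 / L b (α)`. When `deg p < n`, the
alternating sum of the values of `p` over the cube vanishes, so clearing denominators in
`∑ b, (-1) ^ #b / L b` shows that `α` is a zero of `∑ b, (-1) ^ #b * ∏ c ≠ b, L c`.
Since `L ∅ = -β` is constant while every other `L c` has degree one, the term `b = ∅` is the only
one of degree `2 ^ n - 1`. So this polynomial is nonzero, and the Schwartz–Zippel lemma
bounds the number of its zeros in `S ^ n`.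
-/

open Finset MvPolynomial

section CommRing

variable {σ R : Type*} [CommRing R]

theorem sum_mul_prod_erase_of_mul_eq_one {ι : Type*} [DecidableEq ι] (s : Finset ι)
    (w x u : ι → R) (hu : ∀ i ∈ s, u i * x i = 1) :
    ∑ i ∈ s, w i * ∏ j ∈ s.erase i, x j = (∑ i ∈ s, w i * u i) * ∏ j ∈ s, x j := by
  rw [sum_mul]
  refine sum_congr rfl fun i hi => ?_
  rw [← mul_prod_erase s x hi, mul_assoc, ← mul_assoc (u i), hu i hi, one_mul]

theorem sum_neg_one_pow_card_mul_prod_ite_pow_eq_zero [Fintype σ] [DecidableEq σ]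
    {d : σ → ℕ} {i : σ} (hi : d i = 0) :
    ∑ b : Finset σ, (-1 : R) ^ #b * ∏ j, (if j ∈ b then 1 else 0) ^ d j = 0 := by
  calc
    _ = ∑ b : Finset σ, (∏ _j ∈ b, (-1 : R)) * ∏ j ∈ bᶜ, 0 ^ d j := by
      refine sum_congr rfl fun b _ => ?_
      rw [prod_const, ← prod_mul_prod_compl b, prod_eq_one, one_mul]
      · congr 1
        exact prod_congr rfl fun j hj => by rw [if_neg (mem_compl.1 hj)]
      · exact fun j hj => by rw [if_pos hj, one_pow]
    _ = ∏ j, ((-1 : R) + 0 ^ d j) := (Fintype.prod_add _ _).symm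
    _ = 0 := prod_eq_zero (mem_univ i) (by simp [hi])

theorem sum_neg_one_pow_card_mul_eval_eq_zero [Fintype σ] [DecidableEq σ]
    {p : MvPolynomial σ R} (hp : p.totalDegree < Fintype.card σ) :
    ∑ b : Finset σ, (-1 : R) ^ #b * eval (fun i => if i ∈ b then 1 else 0) p = 0 := by
  simp_rw [eval_eq', mul_sum, mul_left_comm]
  rw [sum_comm]
  refine sum_eq_zero fun d hd => ?_
  obtain ⟨i, hi⟩ := p.exists_degree_lt 1 (by rwa [one_mul]) hd
  rw [← mul_sum, sum_neg_one_pow_card_mul_prod_ite_pow_eq_zero (Nat.lt_one_iff.1 hi), mul_zero]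

/-- The linear form `∑ i, α i * x i - β` at the indicator vector of `b`, as a polynomial in the
coefficients `α`. -/
noncomputable def subsetSumSub (β : R) (b : Finset σ) : MvPolynomial σ R :=
  ∑ i ∈ b, X i - C β

theorem eval_subsetSumSub (β : R) (b : Finset σ) (α : σ → R) :
    eval α (subsetSumSub β b) = ∑ i ∈ b, α i - β := by
  simp [subsetSumSub]

theorem totalDegree_subsetSumSub_empty (β : R) :
    (subsetSumSub β (∅ : Finset σ)).totalDegree = 0 := by
  simp [subsetSumSub]

theorem totalDegree_subsetSumSub_le_one (β : R) (b : Finset σ) :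
    (subsetSumSub β b).totalDegree ≤ 1 :=
  (totalDegree_sub_C_le _ _).trans
    (totalDegree_finsetSum_le fun i _ => (isHomogeneous_X R i).totalDegree_le)

theorem totalDegree_subsetSumSub_of_nonempty [Nontrivial R] (β : R) {b : Finset σ}
    (hb : b.Nonempty) : (subsetSumSub β b).totalDegree = 1 := by
  classical
  obtain ⟨i, hi⟩ := hb
  have hcoeff : coeff (Finsupp.single i 1) (subsetSumSub β b) = 1 := by
    simp [subsetSumSub, coeff_sum, coeff_X, Finsupp.single_left_inj, hi,
      (Finsupp.single_ne_zero.2 one_ne_zero).symm]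
  refine (totalDegree_subsetSumSub_le_one β b).antisymm ?_
  simpa using le_totalDegree (mem_support_iff.2 (hcoeff.trans_ne one_ne_zero))

theorem totalDegree_prod_subsetSumSub_le [DecidableEq σ] (β : R) (s : Finset (Finset σ)) :
    (∏ c ∈ s, subsetSumSub β c).totalDegree ≤ #(s.erase ∅) := by
  calc
    _ ≤ ∑ c ∈ s, (subsetSumSub β c).totalDegree := totalDegree_finsetProd _ _
    _ = ∑ c ∈ s.erase ∅, (subsetSumSub β c).totalDegree :=
      (sum_erase s (totalDegree_subsetSumSub_empty β)).symm
    _ ≤ ∑ _c ∈ s.erase ∅, 1 := sum_le_sum fun c _ => totalDegree_subsetSumSub_le_one β c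
    _ = #(s.erase ∅) := (card_eq_sum_ones _).symm

/-- The numerator of `∑ b, (-1) ^ #b / subsetSumSub β b` over the common denominator
`∏ b, subsetSumSub β b`. -/
noncomputable def alternatingNumerator (σ : Type*) [Fintype σ] [DecidableEq σ] (β : R) :
    MvPolynomial σ R :=
  ∑ b : Finset σ, (-1 : R) ^ #b • ∏ c ∈ univ.erase b, subsetSumSub β c

theorem eval_alternatingNumerator_eq_zero [Fintype σ] [DecidableEq σ] {β : R} {α : σ → R}
    {p : MvPolynomial σ R} (hp : p.totalDegree < Fintype.card σ)
    (hagree : ∀ a : σ → R, (∀ i, a i = 0 ∨ a i = 1) → eval a p * (∑ i, α i * a i - β) = 1) :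
    eval α (alternatingNumerator σ β) = 0 := by
  have hinv (b : Finset σ) :
      eval (fun i => if i ∈ b then 1 else 0) p * eval α (subsetSumSub β b) = 1 := by
    simpa [eval_subsetSumSub] using
      hagree (fun i => if i ∈ b then 1 else 0) fun i => (ite_eq_or_eq _ _ _).symm
  simp only [alternatingNumerator, map_sum, smul_eval, map_prod]
  rw [sum_mul_prod_erase_of_mul_eq_one univ _ _ _ fun b _ => hinv b,
    sum_neg_one_pow_card_mul_eval_eq_zero hp, zero_mul]

end CommRing

section IsDomain

variable {σ R : Type*} [CommRing R] [IsDomain R]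

theorem totalDegree_prod_of_isDomain {ι : Type*} (s : Finset ι) (f : ι → MvPolynomial σ R)
    (hf : ∀ i ∈ s, f i ≠ 0) : (∏ i ∈ s, f i).totalDegree = ∑ i ∈ s, (f i).totalDegree := by
  cases exists_wellFoundedGT σ
  simp only [← degree_degLexDegree, MonomialOrder.degree_prod hf, map_sum]

theorem totalDegree_prod_subsetSumSub (β : R) {s : Finset (Finset σ)}
    (hs : ∀ c ∈ s, c.Nonempty) : (∏ c ∈ s, subsetSumSub β c).totalDegree = #s := by
  have hdeg : ∀ c ∈ s, (subsetSumSub β c).totalDegree = 1 :=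
    fun c hc => totalDegree_subsetSumSub_of_nonempty β (hs c hc)
  rw [totalDegree_prod_of_isDomain, sum_congr rfl hdeg, card_eq_sum_ones]
  intro c hc h
  simpa [h] using hdeg c hc

theorem totalDegree_alternatingNumerator (σ : Type*) [Fintype σ] [DecidableEq σ] [Nonempty σ]
    (β : R) : (alternatingNumerator σ β).totalDegree = 2 ^ Fintype.card σ - 1 := by
  have hcard : 1 < 2 ^ Fintype.card σ := Nat.one_lt_two_pow Fintype.card_ne_zero
  have hmain : (∏ c ∈ univ.erase (∅ : Finset σ), subsetSumSub β c).totalDegree =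
      2 ^ Fintype.card σ - 1 := by
    rw [totalDegree_prod_subsetSumSub β fun c hc => nonempty_iff_ne_empty.2 (ne_of_mem_erase hc),
      card_erase_of_mem (mem_univ _), card_univ, Fintype.card_finset]
  have hrest : (∑ b ∈ univ.erase (∅ : Finset σ),
      (-1 : R) ^ #b • ∏ c ∈ univ.erase b, subsetSumSub β c).totalDegree ≤
      2 ^ Fintype.card σ - 2 := by
    refine totalDegree_finsetSum_le fun b hb => ?_
    have hcard_erase : #((univ.erase b).erase ∅) = 2 ^ Fintype.card σ - 2 := by
      rw [card_erase_of_mem (by simpa [eq_comm] using hb), card_erase_of_mem (mem_univ _),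
        card_univ, Fintype.card_finset, Nat.sub_sub]
    exact ((totalDegree_smul_le _ _).trans (totalDegree_prod_subsetSumSub_le β _)).trans_eq
      hcard_erase
  rw [alternatingNumerator, ← add_sum_erase _ _ (mem_univ ∅), card_empty, pow_zero, one_smul,
    totalDegree_add_eq_left_of_totalDegree_lt (by omega), hmain]

theorem alternatingNumerator_ne_zero [Fintype σ] [DecidableEq σ] [Nonempty σ] (β : R) :
    alternatingNumerator σ β ≠ 0 := by
  intro h
  have hdeg := totalDegree_alternatingNumerator σ β
  have hcard : 1 < 2 ^ Fintype.card σ := Nat.one_lt_two_pow Fintype.card_ne_zero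
  rw [h, totalDegree_zero] at hdeg
  omega

theorem card_filter_eval_eq_zero_le [DecidableEq R] {n : ℕ} {p : MvPolynomial (Fin (n + 1)) R}
    (hp : p ≠ 0) (S : Finset R) :
    #{α ∈ Fintype.piFinset fun _ => S | eval α p = 0} ≤ p.totalDegree * #S ^ n := by
  obtain rfl | hS := S.eq_empty_or_nonempty
  · simp
  have h := schwartz_zippel_totalDegree hp S
  have hpos : (0 : ℚ≥0) < #S := by exact_mod_cast hS.card_pos
  rw [div_le_iff₀ (by positivity), pow_succ', ← mul_assoc, div_mul_cancel₀ _ hpos.ne'] at h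
  exact_mod_cast h

open scoped Classical in
theorem degree_lower_bound_random_linear_form_general (n : ℕ) (β : R) (S : Finset R) :
    #{α ∈ Fintype.piFinset fun _ : Fin n => S | ∃ p : MvPolynomial (Fin n) R,
        p.totalDegree < n ∧ ∀ a : Fin n → R, (∀ i, a i = 0 ∨ a i = 1) →
          eval a p * (∑ i, α i * a i - β) = 1} ≤ (2 ^ n - 1) * #S ^ (n - 1) := by
  obtain _ | n := n
  · simp
  have hdeg : (alternatingNumerator (Fin (n + 1)) β).totalDegree = 2 ^ (n + 1) - 1 := by
    simpa using totalDegree_alternatingNumerator (Fin (n + 1)) β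
  calc
    _ ≤ #{α ∈ Fintype.piFinset fun _ => S | eval α (alternatingNumerator (Fin (n + 1)) β) = 0} :=
      card_le_card <| monotone_filter_right _ fun α _ ⟨p, hp, hagree⟩ =>
        eval_alternatingNumerator_eq_zero (by simpa using hp) hagree
    _ ≤ (2 ^ (n + 1) - 1) * #S ^ n :=
      hdeg ▸ card_filter_eval_eq_zero_le (alternatingNumerator_ne_zero β) S

end IsDomain

theorem sum_mul_mem_of_forall_eq_zero_or_one {ι R A : Type*} [Fintype ι] [NonAssocSemiring R]
    [SetLike A R] [AddSubmonoidClass A R] {M : A} {α a : ι → R} (hα : ∀ i, α i ∈ M)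
    (ha : ∀ i, a i = 0 ∨ a i = 1) :
    ∑ i, α i * a i ∈ M :=
  sum_mem fun i _ => by rcases ha i with h | h <;> simp [h, hα i, zero_mem]

open scoped Classical in
/-- Let `F` be a strict subfield of `F'`, `β ∈ F' \ F`, and `S ⊆ F`
a finite nonempty set.  The denominator `∑ i, α i * a i - β` never vanishes on the
Boolean cube, and for the family `f α` of multilinear polynomials agreeing with
`1/(∑ i, α i * x i - β)` on the Boolean cube, the number of `α ∈ S^n` with
`deg (f α) < n` is at most `(2^n - 1) * |S|^(n-1)`. -/
theorem degree_lower_bound_random_linear_form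
    (F' : Type*) [Field F'] (F : Subfield F') (hF : F ≠ ⊤)
    (n : ℕ) (β : F') (hβ : β ∉ F)
    (S : Finset F') (hSF : ∀ s ∈ S, s ∈ F) (hSne : S.Nonempty)
    (f : (Fin n → F') → MvPolynomial (Fin n) F')
    (hml : ∀ α, (∀ i, α i ∈ S) → ∀ i, (f α).degreeOf i ≤ 1)
    (hagree : ∀ α, (∀ i, α i ∈ S) → ∀ a : Fin n → F',
      (∀ i, a i = 0 ∨ a i = 1) →
      MvPolynomial.eval a (f α) * ((∑ i, α i * a i) - β) = 1) :
    (∀ α : Fin n → F', (∀ i, α i ∈ F) → ∀ a : Fin n → F',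
      (∀ i, a i = 0 ∨ a i = 1) → (∑ i, α i * a i) - β ≠ 0) ∧
    ((Fintype.piFinset fun _ : Fin n => S).filter
        fun α => (f α).totalDegree < n).card
      ≤ (2 ^ n - 1) * S.card ^ (n - 1) := by
  constructor
  · intro α hα a ha h
    exact hβ (sub_eq_zero.1 h ▸ sum_mul_mem_of_forall_eq_zero_or_one hα ha)
  · exact (card_le_card <| monotone_filter_right _ fun α hα hdeg =>
      ⟨f α, hdeg, hagree α (Fintype.mem_piFinset.1 hα)⟩).trans
        (degree_lower_bound_random_linear_form_general n β S)
end

section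
/- Let F′ be a field and F a strict subfield of F′, let n ∈ ℕ, fix β ∈ F′ \ F, and let S ⊆ F be a finite nonempty subset. For each α ∈ F^n and each nonempty U ⊆ {1,…,n}, let f_{α,U} ∈ F′[x_1,…,x_n] denote the unique multilinear polynomial that agrees with 1/(Σ_{i∈U} α_i x_i − β) on the Boolean cube {0,1}^n. Then the number of α ∈ S^n for which there exists a nonempty U ⊆ {1,…,n} with deg f_{α,U} < |U| is at most Σ_{∅≠U⊆{1,…,n}} (2^{|U|} − 1)·|S|^{n−1}, which is strictly less than 2^{2n}·|S|^{n−1}. In particular, if |S| > 2^{2n} then there exists α ∈ S^n such that for every nonempty U ⊆ {1,…,n} the coefficient of the monomial ∏_{i∈U} x_i in f_{α,U} is nonzero. -/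
/-!
For `T ⊆ U` put `L_T(y) = ∑_{i ∈ T} y_i - β`. On the indicator vector of `T` the polynomial
`f_{α,U}` takes the value `1 / L_T(α)`, so Möbius inversion over the subsets of `U` expresses the
coefficient of `∏_{i ∈ U} x_i` in `f_{α,U}` as `∑_{T ⊆ U} (-1)^{|U \ T|} / L_T(α)`. Clearing
denominators turns this into a polynomial `Q_U` in `α` of degree at most `2^{|U|} - 1`. It is
nonzero: where `L_U` vanishes only the summand `∏_{T ⊂ U} L_T` of `Q_U` survives, and since `β ≠ 0`
no `L_T` with `T ⊂ U` vanishes on the whole hyperplane `L_U = 0`. The Schwartz–Zippel lemma bounds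
the zeros of `Q_U` in `S^n`, and a union bound over `U` finishes the count.
-/

open Finset MvPolynomial

section Multilinear

variable {σ R : Type*}

lemma sum_powerset_ite_subset_neg_one_pow_card_sdiff [CommRing R] [DecidableEq σ]
    (U V : Finset σ) :
    ∑ T ∈ U.powerset, (if V ⊆ T then (-1 : R) ^ #(U \ T) else 0) = if V = U then 1 else 0 := by
  by_cases hVU : V ⊆ U
  · calc ∑ T ∈ U.powerset, (if V ⊆ T then (-1 : R) ^ #(U \ T) else 0)
        = ∑ T ∈ U.powerset, (∏ _i ∈ T, 1) * ∏ i ∈ U \ T, (if i ∉ V then -1 else 0) := by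
          refine sum_congr rfl fun T _ ↦ ?_
          have hiff : (∀ i ∈ U \ T, i ∉ V) ↔ V ⊆ T := by grind
          simp only [prod_ite_zero, hiff, prod_const, one_pow, one_mul]
      _ = ∏ i ∈ U, (1 + if i ∉ V then -1 else 0) := (prod_add ..).symm
      _ = ∏ i ∈ U, (if i ∈ V then 1 else 0) := prod_congr rfl fun i _ ↦ by split_ifs <;> simp_all
      _ = if V = U then 1 else 0 := by
          have hiff : (∀ i ∈ U, i ∈ V) ↔ V = U := by grind
          simp only [prod_ite_zero, hiff, prod_const_one]
  · rw [if_neg fun h ↦ hVU h.subset]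
    exact sum_eq_zero fun T hT ↦ if_neg fun h ↦ hVU (h.trans (mem_powerset.1 hT))

lemma eval_indicator_one [CommSemiring R] [DecidableEq σ] (p : MvPolynomial σ R)
    (T : Finset σ) :
    eval (Set.indicator (T : Set σ) 1) p =
      ∑ m ∈ p.support, if m.support ⊆ T then p.coeff m else 0 := by
  rw [eval_eq]
  refine sum_congr rfl fun m _ ↦ ?_
  have hpow : ∀ i ∈ m.support,
      Set.indicator (T : Set σ) (1 : σ → R) i ^ m i = if i ∈ T then 1 else 0 := fun i hi ↦ by
    simp [Set.indicator_apply, ite_pow, Finsupp.mem_support_iff.1 hi]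
  rw [prod_congr rfl hpow, prod_ite_zero, prod_const_one, mul_ite, mul_one, mul_zero]
  rfl

lemma eq_sum_single_iff_support_eq {m : σ →₀ ℕ} (hm : ∀ i, m i ≤ 1) (U : Finset σ) :
    m = ∑ i ∈ U, Finsupp.single i 1 ↔ m.support = U := by
  classical
  have hsum (i : σ) : (∑ j ∈ U, Finsupp.single j 1 : σ →₀ ℕ) i = if i ∈ U then 1 else 0 := by
    simp [Finsupp.finsetSum_apply, Finsupp.single_apply]
  simp only [Finsupp.ext_iff, Finset.ext_iff, hsum, Finsupp.mem_support_iff]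
  exact forall_congr' fun i ↦ by have := hm i; split_ifs <;> grind

lemma coeff_sum_single_eq_sum_eval_indicator [CommRing R] [DecidableEq σ]
    {p : MvPolynomial σ R} (hp : ∀ i, p.degreeOf i ≤ 1) (U : Finset σ) :
    p.coeff (∑ i ∈ U, Finsupp.single i 1) =
      ∑ T ∈ U.powerset, (-1) ^ #(U \ T) * eval (Set.indicator (T : Set σ) 1) p := by
  symm
  calc ∑ T ∈ U.powerset, (-1) ^ #(U \ T) * eval (Set.indicator (T : Set σ) 1) p
      = ∑ m ∈ p.support, p.coeff m *
          ∑ T ∈ U.powerset, if m.support ⊆ T then (-1) ^ #(U \ T) else 0 := by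
        simp only [eval_indicator_one, mul_sum]
        rw [sum_comm]
        exact sum_congr rfl fun m _ ↦ sum_congr rfl fun T _ ↦ by split_ifs <;> ring
    _ = ∑ m ∈ p.support, if m = ∑ i ∈ U, Finsupp.single i 1 then p.coeff m else 0 := by
        refine sum_congr rfl fun m hm ↦ ?_
        have hm_le (i : σ) : m i ≤ 1 := (monomial_le_degreeOf i hm).trans (hp i)
        simp only [sum_powerset_ite_subset_neg_one_pow_card_sdiff,
          eq_sum_single_iff_support_eq hm_le, mul_ite, mul_one, mul_zero]
    _ = p.coeff (∑ i ∈ U, Finsupp.single i 1) := by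
        rw [sum_ite_eq']
        exact ite_eq_left_iff.2 fun h ↦ (notMem_support_iff.1 h).symm

lemma coeff_sum_single_eq_zero_of_totalDegree_lt_card [CommSemiring R]
    {p : MvPolynomial σ R} {U : Finset σ} (h : p.totalDegree < #U) :
    p.coeff (∑ i ∈ U, Finsupp.single i 1) = 0 := by
  refine coeff_eq_zero_of_totalDegree_lt ?_
  rwa [← Finsupp.degree_apply, map_sum, sum_congr rfl fun i _ ↦ Finsupp.degree_single i 1,
    sum_const, smul_eq_mul, mul_one]

/-- `p` is the multilinear polynomial agreeing with the function `1 / g` on the Boolean cube. The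
agreement is encoded without division, as `p(a) * g(a) = 1`, so that `R` need not be a field; this
makes the values of `g` on the cube units. -/
structure IsMultilinearReciprocal [CommSemiring R] (g : (σ → R) → R)
    (p : MvPolynomial σ R) : Prop where
  degreeOf_le_one : ∀ i, p.degreeOf i ≤ 1
  eval_mul_eq_one : ∀ a : σ → R, (∀ i, a i = 0 ∨ a i = 1) → eval a p * g a = 1

end Multilinear

lemma exists_sum_eq_C_and_forall_ssubset_sum_ne {σ R : Type*} [CommRing R] {β : R} (hβ : β ≠ 0)
    {U : Finset σ} (hU : U.Nonempty) :
    ∃ g : σ → MvPolynomial σ R, ∑ i ∈ U, g i = C β ∧ ∀ T ⊂ U, ∑ i ∈ T, g i ≠ C β := by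
  classical
  obtain ⟨k, hk⟩ := hU
  have : Nontrivial R := ⟨β, 0, hβ⟩
  let g : σ → MvPolynomial σ R := Function.update X k (C β - ∑ i ∈ U.erase k, X i)
  have sum_g {T : Finset σ} (hkT : k ∉ T) : ∑ i ∈ T, g i = ∑ i ∈ T, X i :=
    sum_update_of_notMem hkT _ _
  have sum_g_U : ∑ i ∈ U, g i = C β := by
    rw [← add_sum_erase _ _ hk, sum_g (notMem_erase k U)]
    simp [g]
  refine ⟨g, sum_g_U, fun T hT hsum ↦ ?_⟩
  by_cases hkT : k ∈ T
  · obtain ⟨j, hjU, hjT⟩ := exists_of_ssubset hT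
    have hzero : ∑ i ∈ U \ T, (X i : MvPolynomial σ R) = 0 := by
      rw [← sum_g (by simp [hkT]), sum_sdiff_eq_sub hT.subset, sum_g_U, hsum, sub_self]
    simpa [Pi.single_apply, hjU, hjT] using congrArg (eval (Pi.single j (1 : R))) hzero
  · rw [sum_g hkT] at hsum
    exact hβ (by simpa using (congrArg (eval (0 : σ → R)) hsum).symm)

section Numerator

variable {σ R : Type*} [DecidableEq σ] [CommRing R]

/-- The polynomial obtained from `∑_{T ⊆ U} (-1)^{|U \ T|} / (∑_{i ∈ T} y_i - β)` by multiplying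
with all the denominators: the numerator, as a polynomial in the weights `y`, of the coefficient of
`∏_{i ∈ U} x_i` in the multilinear polynomial agreeing with `1 / (∑_{i ∈ U} y_i x_i - β)` on the
Boolean cube. -/
noncomputable def topCoeffNumerator (β : R) (U : Finset σ) : MvPolynomial σ R :=
  ∑ T ∈ U.powerset, C ((-1) ^ #(U \ T)) * ∏ T' ∈ U.powerset.erase T, (∑ i ∈ T', X i - C β)

lemma aeval_topCoeffNumerator {A : Type*} [CommRing A] [Algebra R A] (g : σ → A) (β : R)
    (U : Finset σ) :
    aeval g (topCoeffNumerator β U) = ∑ T ∈ U.powerset, (-1) ^ #(U \ T) *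
      ∏ T' ∈ U.powerset.erase T, (∑ i ∈ T', g i - algebraMap R A β) := by
  simp [topCoeffNumerator, map_sum, map_prod]

lemma IsMultilinearReciprocal.eval_topCoeffNumerator {β : R} {U : Finset σ} {α : σ → R}
    {p : MvPolynomial σ R}
    (hp : IsMultilinearReciprocal (fun a ↦ ∑ i ∈ U, α i * a i - β) p) :
    eval α (topCoeffNumerator β U) =
      p.coeff (∑ i ∈ U, Finsupp.single i 1) * ∏ T ∈ U.powerset, (∑ i ∈ T, α i - β) := by
  have hinv {T : Finset σ} (hT : T ⊆ U) :
      eval (Set.indicator (T : Set σ) 1) p * (∑ i ∈ T, α i - β) = 1 := by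
    have h := hp.eval_mul_eq_one (Set.indicator T 1) fun i ↦ by by_cases hi : i ∈ T <;> simp [hi]
    simpa [Set.indicator_apply, sum_ite_mem, inter_eq_right.2 hT] using h
  rw [← aeval_eq_eval, aeval_topCoeffNumerator,
    coeff_sum_single_eq_sum_eval_indicator hp.degreeOf_le_one, sum_mul]
  refine sum_congr rfl fun T hT ↦ ?_
  rw [← mul_prod_erase _ _ hT, mul_assoc, ← mul_assoc (eval _ p), hinv (mem_powerset.1 hT),
    one_mul, Algebra.algebraMap_self_apply]

lemma aeval_topCoeffNumerator_of_sum_eq {A : Type*} [CommRing A] [Algebra R A] {g : σ → A} {β : R}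
    {U : Finset σ} (hg : ∑ i ∈ U, g i = algebraMap R A β) :
    aeval g (topCoeffNumerator β U) = ∏ T ∈ U.ssubsets, (∑ i ∈ T, g i - algebraMap R A β) := by
  rw [aeval_topCoeffNumerator, sum_eq_single_of_mem U (mem_powerset_self U)]
  · simp [ssubsets]
  · intro T _ hTU
    rw [prod_eq_zero (mem_erase.2 ⟨hTU.symm, mem_powerset_self U⟩) (sub_eq_zero.2 hg), mul_zero]

lemma topCoeffNumerator_ne_zero [IsDomain R] {β : R} (hβ : β ≠ 0) {U : Finset σ}
    (hU : U.Nonempty) : topCoeffNumerator β U ≠ 0 := by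
  obtain ⟨g, hgU, hgT⟩ := exists_sum_eq_C_and_forall_ssubset_sum_ne hβ hU
  intro h
  have hprod := aeval_topCoeffNumerator_of_sum_eq hgU
  rw [h, map_zero] at hprod
  exact prod_ne_zero_iff.2 (fun T hT ↦ sub_ne_zero.2 (hgT T (mem_ssubsets.1 hT))) hprod.symm

lemma totalDegree_topCoeffNumerator_le (β : R) (U : Finset σ) :
    (topCoeffNumerator β U).totalDegree ≤ 2 ^ #U - 1 := by
  have hX (i : σ) : (X i : MvPolynomial σ R).totalDegree ≤ 1 :=
    (totalDegree_monomial_le _ _).trans_eq (by simp)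
  have hlin (T : Finset σ) : (∑ i ∈ T, X i - C β : MvPolynomial σ R).totalDegree ≤ 1 :=
    (totalDegree_sub_C_le _ _).trans (totalDegree_finsetSum_le fun i _ ↦ hX i)
  refine totalDegree_finsetSum_le fun T hT ↦ ?_
  calc _ ≤ (C ((-1) ^ #(U \ T)) : MvPolynomial σ R).totalDegree +
        (∏ T' ∈ U.powerset.erase T, (∑ i ∈ T', X i - C β : MvPolynomial σ R)).totalDegree :=
        totalDegree_mul _ _
    _ ≤ ∑ T' ∈ U.powerset.erase T, (∑ i ∈ T', X i - C β : MvPolynomial σ R).totalDegree := by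
        rw [totalDegree_C, zero_add]
        exact totalDegree_finsetProd _ _
    _ ≤ #(U.powerset.erase T) • 1 := sum_le_card_nsmul _ _ _ fun T' _ ↦ hlin T'
    _ = 2 ^ #U - 1 := by rw [card_erase_of_mem hT, card_powerset, smul_eq_mul, mul_one]

end Numerator

section Counting

lemma card_filter_eval_eq_zero_le_totalDegree_mul {R : Type*} [CommRing R] [IsDomain R]
    [DecidableEq R] {n : ℕ} {p : MvPolynomial (Fin n) R} (hp : p ≠ 0) (S : Finset R) :
    #{α ∈ Fintype.piFinset fun _ ↦ S | eval α p = 0} ≤ p.totalDegree * #S ^ (n - 1) := by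
  rcases n with _ | n
  · obtain ⟨c, rfl⟩ := C_surjective (Fin 0) p
    simp_all
  rcases S.eq_empty_or_nonempty with rfl | hS
  · simp
  have hcard : (0 : ℚ≥0) < #S := mod_cast hS.card_pos
  have h := schwartz_zippel_totalDegree hp S
  rw [div_le_iff₀ (by positivity), pow_succ', ← mul_assoc, div_mul_cancel₀ _ hcard.ne'] at h
  exact_mod_cast h

open scoped Classical in
lemma card_filter_coeff_sum_single_eq_zero_le {R : Type*} [CommRing R] [IsDomain R] {n : ℕ}
    {β : R} {S : Finset R} {U : Finset (Fin n)} (hU : U.Nonempty)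
    {f : (Fin n → R) → MvPolynomial (Fin n) R}
    (hf : ∀ α, (∀ i, α i ∈ S) → IsMultilinearReciprocal (fun a ↦ ∑ i ∈ U, α i * a i - β) (f α)) :
    #{α ∈ Fintype.piFinset fun _ ↦ S | (f α).coeff (∑ i ∈ U, Finsupp.single i 1) = 0} ≤
      (2 ^ #U - 1) * #S ^ (n - 1) := by
  rcases S.eq_empty_or_nonempty with rfl | ⟨s, hs⟩
  · have : Nonempty (Fin n) := ⟨hU.choose⟩
    simp
  have hβ : β ≠ 0 := by
    rintro rfl
    simpa using (hf (fun _ ↦ s) fun _ ↦ hs).eval_mul_eq_one 0 fun _ ↦ Or.inl rfl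
  calc #{α ∈ Fintype.piFinset fun _ ↦ S | (f α).coeff (∑ i ∈ U, Finsupp.single i 1) = 0}
      ≤ #{α ∈ Fintype.piFinset fun _ ↦ S | eval α (topCoeffNumerator β U) = 0} := by
        refine card_le_card fun α hα ↦ ?_
        obtain ⟨hαS, h0⟩ := mem_filter.1 hα
        refine mem_filter.2 ⟨hαS, ?_⟩
        rw [(hf α (Fintype.mem_piFinset.1 hαS)).eval_topCoeffNumerator, h0, zero_mul]
    _ ≤ (topCoeffNumerator β U).totalDegree * #S ^ (n - 1) :=
        card_filter_eval_eq_zero_le_totalDegree_mul (topCoeffNumerator_ne_zero hβ hU) S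
    _ ≤ (2 ^ #U - 1) * #S ^ (n - 1) :=
        Nat.mul_le_mul_right _ (totalDegree_topCoeffNumerator_le β U)

open scoped Classical in
lemma card_filter_exists_coeff_sum_single_eq_zero_le {R : Type*} [CommRing R] [IsDomain R] {n : ℕ}
    {β : R} {S : Finset R} {f : (Fin n → R) → Finset (Fin n) → MvPolynomial (Fin n) R}
    (hf : ∀ α, (∀ i, α i ∈ S) → ∀ U : Finset (Fin n), U.Nonempty →
      IsMultilinearReciprocal (fun a ↦ ∑ i ∈ U, α i * a i - β) (f α U)) :
    #{α ∈ Fintype.piFinset fun _ ↦ S |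
        ∃ U : Finset (Fin n), U.Nonempty ∧ (f α U).coeff (∑ i ∈ U, Finsupp.single i 1) = 0} ≤
      (∑ U : Finset (Fin n) with U.Nonempty, (2 ^ #U - 1)) * #S ^ (n - 1) := by
  have hunion : (Fintype.piFinset fun _ ↦ S).filter (fun α ↦
        ∃ U : Finset (Fin n), U.Nonempty ∧ (f α U).coeff (∑ i ∈ U, Finsupp.single i 1) = 0) =
      ({U | U.Nonempty} : Finset (Finset (Fin n))).biUnion fun U ↦
        {α ∈ Fintype.piFinset fun _ ↦ S | (f α U).coeff (∑ i ∈ U, Finsupp.single i 1) = 0} := by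
    ext α
    simp only [mem_filter, mem_biUnion, mem_univ, true_and]
    tauto
  rw [hunion, sum_mul]
  refine card_biUnion_le.trans (sum_le_sum fun U hU ↦ ?_)
  have hU := (mem_filter.1 hU).2
  exact card_filter_coeff_sum_single_eq_zero_le hU fun α hα ↦ hf α hα U hU

lemma sum_nonempty_two_pow_card_sub_one_lt (σ : Type*) [Fintype σ] :
    ∑ U : Finset σ with U.Nonempty, (2 ^ #U - 1) < 2 ^ (2 * Fintype.card σ) :=
  calc ∑ U : Finset σ with U.Nonempty, (2 ^ #U - 1)
      ≤ ∑ U : Finset σ, (2 ^ #U - 1) := sum_le_sum_of_subset (filter_subset _ _)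
    _ < ∑ U : Finset σ, 2 ^ #U :=
        sum_lt_sum_of_nonempty univ_nonempty fun U _ ↦ Nat.sub_lt (by positivity) one_pos
    _ = (2 + 1) ^ Fintype.card σ := by
        simp only [← Fintype.sum_pow_mul_eq_add_pow, one_pow, mul_one]
    _ ≤ 2 ^ (2 * Fintype.card σ) := by
        rw [pow_mul]
        gcongr
        norm_num

end Counting

open scoped Classical in
theorem degree_lower_bound_all_restrictions_general
    {R : Type*} [CommRing R] [IsDomain R] {n : ℕ} {β : R} {S : Finset R} (hSne : S.Nonempty)
    {f : (Fin n → R) → Finset (Fin n) → MvPolynomial (Fin n) R}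
    (hf : ∀ α, (∀ i, α i ∈ S) → ∀ U : Finset (Fin n), U.Nonempty →
      IsMultilinearReciprocal (fun a ↦ ∑ i ∈ U, α i * a i - β) (f α U)) :
    #{α ∈ Fintype.piFinset fun _ ↦ S |
        ∃ U : Finset (Fin n), U.Nonempty ∧ (f α U).totalDegree < #U} ≤
      (∑ U : Finset (Fin n) with U.Nonempty, (2 ^ #U - 1)) * #S ^ (n - 1) ∧
    (∑ U : Finset (Fin n) with U.Nonempty, (2 ^ #U - 1)) * #S ^ (n - 1) <
      2 ^ (2 * n) * #S ^ (n - 1) ∧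
    (2 ^ (2 * n) < #S →
      ∃ α : Fin n → R, (∀ i, α i ∈ S) ∧ ∀ U : Finset (Fin n), U.Nonempty →
        (f α U).coeff (∑ i ∈ U, Finsupp.single i 1) ≠ 0) := by
  have hcard := card_filter_exists_coeff_sum_single_eq_zero_le hf
  have hlt : (∑ U : Finset (Fin n) with U.Nonempty, (2 ^ #U - 1)) * #S ^ (n - 1) <
      2 ^ (2 * n) * #S ^ (n - 1) := by
    have h := sum_nonempty_two_pow_card_sub_one_lt (Fin n)
    rw [Fintype.card_fin] at h
    exact Nat.mul_lt_mul_of_pos_right h (pow_pos hSne.card_pos _)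
  refine ⟨(card_le_card ?_).trans hcard, hlt, fun hS ↦ ?_⟩
  · exact monotone_filter_right _ fun α _ ⟨U, hU, hdeg⟩ ↦
      ⟨U, hU, coeff_sum_single_eq_zero_of_totalDegree_lt_card hdeg⟩
  · have hle : 2 ^ (2 * n) * #S ^ (n - 1) ≤ #(Fintype.piFinset fun _ : Fin n ↦ S) := by
      rw [Fintype.card_piFinset_const]
      rcases n with _ | n
      · simp
      · rw [pow_succ']
        exact Nat.mul_le_mul_right _ hS.le
    obtain ⟨α, hα, hgood⟩ :=
      exists_mem_notMem_of_card_lt_card (hcard.trans_lt (hlt.trans_le hle))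
    exact ⟨α, Fintype.mem_piFinset.1 hα, fun U hU h0 ↦ hgood (mem_filter.2 ⟨hα, U, hU, h0⟩)⟩

open scoped Classical in
/-- Let `F` be a strict subfield of `F'`, `β ∈ F' \ F`, `S ⊆ F` finite
nonempty.  For `α ∈ F^n` and nonempty `U ⊆ [n]`, `f α U` is the multilinear polynomial
agreeing with `1/(∑_{i ∈ U} α i * x i - β)` on the Boolean cube.  The number of
`α ∈ S^n` for which some nonempty `U` gives `deg (f α U) < |U|` is at most
`(∑_{∅≠U} (2^{|U|} - 1)) * |S|^(n-1) < 2^{2n} * |S|^(n-1)`; in particular if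
`|S| > 2^{2n}` there is an `α ∈ S^n` such that for all nonempty `U` the coefficient of
`∏_{i ∈ U} x i` in `f α U` is nonzero. -/
theorem degree_lower_bound_all_restrictions
    (F' : Type*) [Field F'] (F : Subfield F') (hF : F ≠ ⊤)
    (n : ℕ) (β : F') (hβ : β ∉ F)
    (S : Finset F') (hSF : ∀ s ∈ S, s ∈ F) (hSne : S.Nonempty)
    (f : (Fin n → F') → Finset (Fin n) → MvPolynomial (Fin n) F')
    (hml : ∀ α, (∀ i, α i ∈ S) → ∀ U : Finset (Fin n), U.Nonempty →
      ∀ i, (f α U).degreeOf i ≤ 1)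
    (hagree : ∀ α, (∀ i, α i ∈ S) → ∀ U : Finset (Fin n), U.Nonempty →
      ∀ a : Fin n → F', (∀ i, a i = 0 ∨ a i = 1) →
      MvPolynomial.eval a (f α U) * ((∑ i ∈ U, α i * a i) - β) = 1) :
    ((Fintype.piFinset fun _ : Fin n => S).filter
        (fun α => ∃ U : Finset (Fin n), U.Nonempty ∧ (f α U).totalDegree < U.card)).card
      ≤ (∑ U ∈ (Finset.univ.powerset.filter Finset.Nonempty : Finset (Finset (Fin n))),
          (2 ^ U.card - 1)) * S.card ^ (n - 1) ∧
    (∑ U ∈ (Finset.univ.powerset.filter Finset.Nonempty : Finset (Finset (Fin n))),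
        (2 ^ U.card - 1)) * S.card ^ (n - 1)
      < 2 ^ (2 * n) * S.card ^ (n - 1) ∧
    (2 ^ (2 * n) < S.card →
      ∃ α : Fin n → F', (∀ i, α i ∈ S) ∧ ∀ U : Finset (Fin n), U.Nonempty →
        (f α U).coeff (∑ i ∈ U, Finsupp.single i 1) ≠ 0) := by
  simpa only [powerset_univ] using degree_lower_bound_all_restrictions_general hSne
    fun α hα U hU ↦ ⟨hml α hα U hU, hagree α hα U hU⟩
end

section
/- Let n ∈ ℕ, let p be a prime, and let k ∈ ℕ satisfy p^k > 2^{2n}. Let F̃ be a finite field with p^{2k} elements, let F be its subfield with p^k elements, and let β ∈ F̃ \ F. Then there exists α = (α_1,…,α_n) ∈ F^n such that, letting f ∈ F̃[x_1,…,x_n,y_1,…,y_n] be the unique multilinear polynomial satisfying f(a,b)·(Σ_i α_i a_i b_i − β) = 1 for all a, b ∈ {0,1}^n, the F̃-linear span of the polynomials { f(x,b) : b ∈ {0,1}^n } ⊆ F̃[x_1,…,x_n] (where f(x,b) is obtained by substituting y_i := b_i) has dimension at least 2^n. -/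
/-!
Evaluating `f(x, 1_T)` at `x = 1_S` gives `g (S ∩ T)` with `g U = (∑ i ∈ U, α i - β)⁻¹`. The matrix
`g (S ∩ T)` is congruent, through the unitriangular inclusion matrix, to the diagonal matrix of
alternating sums of `g` over the subsets of each `W`, so the `f(x, 1_T)` are linearly independent as
soon as none of these sums vanishes. The values `α i` are chosen one at a time: inserting `i` into
`W` subtracts from the sum for `W`, already nonzero, a rational function of `t = α i` with at most
`2 ^ #W` poles that vanishes at infinity, so at most `2 ^ #W` values of `t` are bad. Over all
`W ⊆ s` this excludes at most `∑ 2 ^ #W = 3 ^ #s` values.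
-/

open Finset

section MoebiusTransform

variable {ι R : Type*}

/-- The Möbius transform of a function on the Boolean lattice of finite sets, without the usual
global sign `(-1) ^ #W`, which is irrelevant to whether it vanishes. -/
def signedMoebius [Ring R] (g : Finset ι → R) (W : Finset ι) : R :=
  ∑ U ∈ W.powerset, (-1) ^ #U * g U

theorem signedMoebius_congr [Ring R] {g h : Finset ι → R} {W : Finset ι}
    (hgh : ∀ U ⊆ W, g U = h U) : signedMoebius g W = signedMoebius h W :=
  sum_congr rfl fun U hU => by rw [hgh U (mem_powerset.1 hU)]

theorem signedMoebius_insert [DecidableEq ι] [Ring R] (g : Finset ι → R) {i : ι} {W : Finset ι}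
    (hi : i ∉ W) :
    signedMoebius g (insert i W) =
      signedMoebius g W - signedMoebius (fun U => g (insert i U)) W := by
  simp only [signedMoebius]
  rw [sum_powerset_insert hi, sub_eq_add_neg, ← sum_neg_distrib]
  congr 1
  refine sum_congr rfl fun U hU => ?_
  rw [card_insert_of_notMem fun h => hi (mem_powerset.1 hU h), pow_succ, mul_neg_one, neg_mul]

theorem signedMoebius_inter [DecidableEq ι] [Ring R] (g : Finset ι → R) (T W : Finset ι) :
    signedMoebius (fun S => g (S ∩ T)) W = if W ⊆ T then signedMoebius g W else 0 := by
  split_ifs with hWT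
  · exact signedMoebius_congr fun S hS => by rw [inter_eq_left.2 (hS.trans hWT)]
  · obtain ⟨i, hiW, hiT⟩ := not_subset.1 hWT
    rw [← insert_erase hiW, signedMoebius_insert _ (notMem_erase i W)]
    simp only [insert_inter_of_notMem hiT, sub_self]

theorem signedMoebius_sum_update_of_notMem {M : Type*} [DecidableEq ι] [AddCommMonoid M] [Ring R]
    (φ : M → R) (α : ι → M) (t : M) {i : ι} {W : Finset ι} (hi : i ∉ W) :
    signedMoebius (fun U => φ (∑ j ∈ U, Function.update α i t j)) W =
      signedMoebius (fun U => φ (∑ j ∈ U, α j)) W :=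
  signedMoebius_congr fun U hU => by rw [sum_update_of_notMem fun h => hi (hU h)]

theorem signedMoebius_sum_update_insert {M : Type*} [DecidableEq ι] [AddCommMonoid M] [Ring R]
    (φ : M → R) (α : ι → M) (t : M) {i : ι} {W : Finset ι} (hi : i ∉ W) :
    signedMoebius (fun U => φ (∑ j ∈ U, Function.update α i t j)) (insert i W) =
      signedMoebius (fun U => φ (∑ j ∈ U, α j)) W -
        signedMoebius (fun U => φ (t + ∑ j ∈ U, α j)) W := by
  rw [signedMoebius_insert _ hi, signedMoebius_sum_update_of_notMem φ α t hi]
  congr 1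
  refine signedMoebius_congr fun U hU => ?_
  have hiU : i ∉ U := fun h => hi (hU h)
  rw [sum_insert hiU, Function.update_self, sum_update_of_notMem hiU]

theorem eq_zero_of_forall_sum_ge_eq_zero {P : Type*} [Fintype P] [PartialOrder P] [DecidableLE P]
    [AddCommMonoid R] {c : P → R} (hc : ∀ x, ∑ y with x ≤ y, c y = 0) : c = 0 := by
  funext x
  induction x using WellFoundedGT.induction with
  | ind x ih =>
    refine (sum_eq_single_of_mem x (by simp) fun y hy hyx => ?_).symm.trans (hc x)
    exact ih y ((mem_filter.1 hy).2.lt_of_ne hyx.symm)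

theorem linearIndependent_inter [Finite ι] [DecidableEq ι] [CommRing R] [NoZeroDivisors R]
    {g : Finset ι → R} (hg : ∀ W, signedMoebius g W ≠ 0) :
    LinearIndependent R fun T S : Finset ι => g (S ∩ T) := by
  cases nonempty_fintype ι
  refine Fintype.linearIndependent_iff.2 fun c hc =>
    congrFun (eq_zero_of_forall_sum_ge_eq_zero fun W => ?_)
  have hrow (S : Finset ι) : ∑ T, c T * g (S ∩ T) = 0 := by
    simpa only [Finset.sum_apply, Pi.smul_apply, smul_eq_mul, Pi.zero_apply] using congrFun hc S
  refine (mul_eq_zero.1 ?_).resolve_right (hg W)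
  calc (∑ T with W ⊆ T, c T) * signedMoebius g W
      = ∑ T, c T * signedMoebius (fun S => g (S ∩ T)) W := by
        simp only [signedMoebius_inter, sum_mul, sum_filter, ite_mul, mul_ite, zero_mul, mul_zero]
    _ = ∑ S ∈ W.powerset, (-1) ^ #S * ∑ T, c T * g (S ∩ T) := by
        simp only [signedMoebius, mul_sum, mul_left_comm (c _)]
        exact sum_comm
    _ = 0 := by simp only [hrow, mul_zero, sum_const_zero]

end MoebiusTransform

section GenericCoefficients

variable {ι κ K : Type*} [Field K]

open Polynomial Lagrange in
theorem exists_finset_card_le_of_sum_div_sub_eq (s : Finset κ) (r d : κ → K) {h : K}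
    (hh : h ≠ 0) :
    ∃ Z : Finset K, #Z ≤ #s ∧ ∀ t, (∀ j ∈ s, t ≠ d j) → ∑ j ∈ s, r j / (t - d j) = h → t ∈ Z := by
  classical
  -- `h - ∑ j, r j / (X - d j)` with denominators cleared
  let P : K[X] := C h * nodal s d - ∑ j ∈ s, C (r j) * nodal (s.erase j) d
  have hlead : (C h * nodal s d).degree = #s := by rw [degree_C_mul hh, degree_nodal]
  have hlower : (∑ j ∈ s, C (r j) * nodal (s.erase j) d).degree < #s := by
    rw [← mem_degreeLT]
    refine sum_mem fun j hj => ?_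
    rw [← smul_eq_C_mul]
    refine Submodule.smul_mem _ _ (mem_degreeLT.2 ?_)
    rw [degree_nodal]
    exact_mod_cast card_erase_lt_of_mem hj
  have hP : P.degree = #s := by rw [degree_sub_eq_left_of_degree_lt (hlead ▸ hlower), hlead]
  have hP0 : P ≠ 0 := fun h0 => by simp [h0] at hP
  refine ⟨P.roots.toFinset, ?_, fun t ht hsum => ?_⟩
  · exact (Multiset.toFinset_card_le _).trans
      ((card_roots' P).trans (natDegree_eq_of_degree_eq_some hP).le)
  · rw [Multiset.mem_toFinset, mem_roots hP0, IsRoot, eval_sub, eval_mul, eval_C, eval_finsetSum,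
      ← hsum, sum_mul, sub_eq_zero]
    refine sum_congr rfl fun j hj => ?_
    rw [nodal_eq_mul_nodal_erase hj, eval_mul, eval_mul, eval_C, eval_sub, eval_X, eval_C,
      ← mul_assoc, div_mul_cancel₀ _ (sub_ne_zero.2 (ht j hj))]

theorem sum_powerset_two_pow_card (s : Finset ι) : ∑ W ∈ s.powerset, 2 ^ #W = 3 ^ #s := by
  simpa only [one_pow, mul_one] using sum_pow_mul_eq_add_pow (2 : ℕ) 1 s

variable {S : Type*} [SetLike S K] [AddSubmonoidClass S K] (F : S) {β : K}

theorem exists_mem_forall_signedMoebius_ne (hβ : β ∉ F) {s : Finset ι}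
    (hs : 3 ^ #s < ENat.card F) {α : ι → K} (hα : ∀ i, α i ∈ F) {h : Finset ι → K}
    (hh : ∀ W ⊆ s, h W ≠ 0) :
    ∃ t ∈ F, ∀ W ⊆ s, signedMoebius (fun U => (t + ∑ i ∈ U, α i - β)⁻¹) W ≠ h W := by
  classical
  choose! Z hcard hZ using fun W (hW : W ⊆ s) =>
    exists_finset_card_le_of_sum_div_sub_eq W.powerset (fun U => (-1) ^ #U)
      (fun U => β - ∑ i ∈ U, α i) (hh W hW)
  have hbad : #(s.powerset.biUnion Z) ≤ 3 ^ #s := by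
    rw [← sum_powerset_two_pow_card]
    refine card_biUnion_le.trans (sum_le_sum fun W hW => ?_)
    exact (hcard W (mem_powerset.1 hW)).trans_eq (card_powerset W)
  obtain ⟨t, htF, ht⟩ : ∃ t ∈ (F : Set K), t ∉ (s.powerset.biUnion Z : Set K) := by
    refine Set.not_subset.1 fun hsub => hs.not_ge ((Set.encard_le_encard hsub).trans ?_)
    rw [Set.encard_coe_eq_coe_finsetCard]
    exact_mod_cast hbad
  refine ⟨t, htF, fun W hW heq => ht (mem_biUnion.2 ⟨W, mem_powerset.2 hW, hZ W hW t ?_ ?_⟩)⟩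
  · rintro U - rfl
    exact hβ (by simpa using add_mem htF (sum_mem fun i (_ : i ∈ U) => hα i))
  · rw [← heq]
    exact sum_congr rfl fun U _ => by rw [div_eq_mul_inv, sub_sub_eq_add_sub]

theorem exists_forall_signedMoebius_inv_sum_sub_ne_zero (hβ : β ∉ F) (s : Finset ι)
    (hs : 3 ^ #s ≤ ENat.card F) :
    ∃ α : ι → K, (∀ i, α i ∈ F) ∧
      ∀ W ⊆ s, signedMoebius (fun U => (∑ i ∈ U, α i - β)⁻¹) W ≠ 0 := by
  classical
  induction s using Finset.induction_on with
  | empty =>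
    have hβ0 : β ≠ 0 := fun h => hβ (h ▸ zero_mem F)
    refine ⟨0, fun _ => zero_mem F, fun W hW => ?_⟩
    simpa [signedMoebius, subset_empty.1 hW] using hβ0
  | insert i s hi ih =>
    have hlt : (3 : ℕ∞) ^ #s < ENat.card F := by
      refine lt_of_lt_of_le ?_ hs
      rw [card_insert_of_notMem hi]
      exact_mod_cast Nat.pow_lt_pow_succ (by norm_num)
    obtain ⟨α, hαF, hα⟩ := ih hlt.le
    obtain ⟨t, htF, ht⟩ := exists_mem_forall_signedMoebius_ne F hβ hlt hαF hα
    refine ⟨Function.update α i t, fun j => ?_, fun W hW => ?_⟩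
    · obtain rfl | hj := eq_or_ne j i
      · simpa only [Function.update_self] using htF
      · simpa only [Function.update_of_ne hj] using hαF j
    · by_cases hiW : i ∈ W
      · rw [← insert_erase hiW,
          signedMoebius_sum_update_insert (fun x => (x - β)⁻¹) α t (notMem_erase i W), sub_ne_zero]
        exact (ht _ (subset_insert_iff.1 hW)).symm
      · rw [signedMoebius_sum_update_of_notMem (fun x => (x - β)⁻¹) α t hiW]
        exact hα W ((subset_insert_iff_of_notMem hiW).1 hW)

end GenericCoefficients

section EvaluationSpan

open MvPolynomial

variable {ι K : Type*} [Fintype ι] [Field K]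

theorem linearIndependent_aeval_of_eval_mul_eq_one {α : ι → K} {β : K}
    (hα : ∀ W, signedMoebius (fun U => (∑ i ∈ U, α i - β)⁻¹) W ≠ 0) {f : MvPolynomial (ι ⊕ ι) K}
    (hf : ∀ a b : ι → K, (∀ i, a i = 0 ∨ a i = 1) → (∀ i, b i = 0 ∨ b i = 1) →
      eval (Sum.elim a b) f * (∑ i, α i * a i * b i - β) = 1) :
    LinearIndependent K fun b : ι → Bool =>
      aeval (Sum.elim (X : ι → MvPolynomial ι K) fun i => C (if b i then (1 : K) else 0)) f := by
  classical
  let support (b : ι → Bool) : Finset ι := {i | b i}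
  have support_injective : Function.Injective support := fun b b' h =>
    funext fun i => Bool.eq_iff_iff.2 (by simpa [support] using Finset.ext_iff.1 h i)
  let evalCube : MvPolynomial ι K →ₗ[K] Finset ι → K :=
    LinearMap.pi fun S => (aeval fun i => if i ∈ S then (1 : K) else 0).toLinearMap
  have heval (b : ι → Bool) (S : Finset ι) :
      evalCube (aeval (Sum.elim X fun i => C (if b i then (1 : K) else 0)) f) S =
        (∑ i ∈ S ∩ support b, α i - β)⁻¹ := by
    have hsum : ∑ i, α i * (if i ∈ S then 1 else 0) * (if b i then 1 else 0) =
        ∑ i ∈ S ∩ support b, α i := by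
      simp_rw [mul_boole]
      rw [← sum_filter, sum_ite_mem, inter_comm]
    have hmul := hf (fun i => if i ∈ S then 1 else 0) (fun i => if b i then 1 else 0)
      (fun i => (ite_eq_or_eq _ _ _).symm) (fun i => (ite_eq_or_eq _ _ _).symm)
    rw [hsum] at hmul
    exact (aeval_sumElim f _ _).symm.trans (eq_inv_of_mul_eq_one_left hmul)
  refine LinearIndependent.of_comp evalCube ?_
  rw [Function.comp_def, funext fun b => funext (heval b)]
  exact (linearIndependent_inter hα).comp support support_injective

theorem roabp_fixed_order_functional_lower_bound_general {S : Type*} [SetLike S K]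
    [AddSubmonoidClass S K] (F : S) (hF : 3 ^ Fintype.card ι ≤ ENat.card F) {β : K} (hβ : β ∉ F) :
    ∃ α : ι → K, (∀ i, α i ∈ F) ∧
      ∀ f : MvPolynomial (ι ⊕ ι) K,
        (∀ a b : ι → K, (∀ i, a i = 0 ∨ a i = 1) → (∀ i, b i = 0 ∨ b i = 1) →
          eval (Sum.elim a b) f * (∑ i, α i * a i * b i - β) = 1) →
        LinearIndependent K fun b : ι → Bool =>
          aeval (Sum.elim (X : ι → MvPolynomial ι K)
            fun i => C (if b i then (1 : K) else 0)) f := by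
  obtain ⟨α, hαF, hα⟩ := exists_forall_signedMoebius_inv_sum_sub_ne_zero F hβ univ hF
  exact ⟨α, hαF, fun _ => linearIndependent_aeval_of_eval_mul_eq_one fun W => hα W (subset_univ W)⟩

end EvaluationSpan

/-- Functional lower bound against roABPs in the order where `x`
precedes `y`: for `p` prime, `p^k > 2^{2n}`, a finite field `F'` of size `p^{2k}` with
subfield `F` of size `p^k`, and `β ∈ F' \ F`, there exists `α ∈ F^n` so that the
multilinear polynomial `f` agreeing with `1/(∑ i, α i * x i * y i - β)` on the Boolean
cube has evaluation span `{ f(x, b) : b ∈ {0,1}^n }` of dimension at least `2^n`. -/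
theorem roabp_fixed_order_functional_lower_bound
    (n : ℕ) (p : ℕ) (hp : p.Prime) (k : ℕ) (hpk : 2 ^ (2 * n) < p ^ k)
    (F' : Type*) [Field F'] [Fintype F'] (hcard : Fintype.card F' = p ^ (2 * k))
    (F : Subfield F') (hFcard : Nat.card F = p ^ k)
    (β : F') (hβ : β ∉ F) :
    ∃ α : Fin n → F', (∀ i, α i ∈ F) ∧
      ∀ f : MvPolynomial (Fin n ⊕ Fin n) F',
        (∀ v, f.degreeOf v ≤ 1) →
        (∀ a b : Fin n → F', (∀ i, a i = 0 ∨ a i = 1) → (∀ i, b i = 0 ∨ b i = 1) →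
          MvPolynomial.eval (Sum.elim a b) f * ((∑ i, α i * a i * b i) - β) = 1) →
        2 ^ n ≤ Module.finrank F' ↥(Submodule.span F'
          (Set.range fun b : Fin n → Bool =>
            MvPolynomial.aeval
              (Sum.elim (MvPolynomial.X : Fin n → MvPolynomial (Fin n) F')
                (fun i => MvPolynomial.C (if b i then (1 : F') else 0))) f)) := by
  have hF : 3 ^ Fintype.card (Fin n) ≤ ENat.card F := by
    rw [pow_mul] at hpk
    rw [ENat.card_eq_coe_natCard, hFcard, Fintype.card_fin]
    exact_mod_cast (Nat.pow_le_pow_left (by norm_num) n).trans hpk.le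
  obtain ⟨α, hαF, hα⟩ := roabp_fixed_order_functional_lower_bound_general F hF hβ
  refine ⟨α, hαF, fun f _ hf => ?_⟩
  rw [finrank_span_eq_card (hα f hf), Fintype.card_pi_const, Fintype.card_bool]
end

section
/- Let n ∈ ℕ, let p be a prime, and let k ∈ ℕ satisfy p^k > C(2n,n)·2^{2n}. Let F̃ be a finite field with p^{2k} elements, let F be its subfield with p^k elements, and let β ∈ F̃ \ F. Then there exists a family α = (α_{i,j})_{1≤i<j≤2n} of elements of F such that the following holds for every partition of {1,…,2n} into two sets U = {u_1 < … < u_n} and V = {v_1 < … < v_n} of size n each: letting g ∈ F̃[x_1,…,x_{2n}] be the unique multilinear polynomial that agrees with 1/(Σ_{k=1}^n α_{u_k,v_k} x_{u_k} x_{v_k} − β) on {0,1}^{2n} (where α_{u,v} denotes α_{min(u,v),max(u,v)}), the F̃-linear span of the 2^n polynomials obtained from g by substituting x_{v_k} := c_k for all k, over all c ∈ {0,1}^n, has dimension at least 2^n. -/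
/-!
For weights `w` indexed by the matched pairs, substituting `c` for the `v`-variables and the
indicator of `D` for the `u`-variables of `g` gives `f (c ∩ D)`, where
`f T = (∑ i ∈ T, w i - β)⁻¹`. The matrix `(f (c ∩ D))` factors through the triangular zeta matrix
of the subset lattice, with diagonal part the alternating sums `∑ T ⊆ S, (-1) ^ #T * f T`; hence
its rows are independent as soon as none of these sums vanishes.

Cleared of denominators, such a sum is a nonzero polynomial of degree at most `2 ^ n` in the
weights: modulo `∑ i ∈ S, X i - β` only the term `T = S` survives. There are at most
`(2 * n).choose n` pairs `(u, v)` and `2 ^ n` sets `S` for each, so a union bound of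
Schwartz–Zippel type provides `α` for which none of the sums vanishes.
-/

open Finset MvPolynomial

section IntersectionFamily

variable {ι R M : Type*} [CommRing R]

theorem linearIndependent_of_triangular_dual [NoZeroDivisors R] [AddCommGroup M] [Module R M]
    [PartialOrder ι] {v : ι → M} (φ : ι → M →ₗ[R] R) (hdiag : ∀ i, φ i (v i) ≠ 0)
    (htri : ∀ i j, ¬i ≤ j → φ i (v j) = 0) : LinearIndependent R v := by
  rw [linearIndependent_iff]
  intro l hl
  by_contra hne
  obtain ⟨i, hi, hmax⟩ := l.support.exists_maximal (Finsupp.support_nonempty_iff.mpr hne)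
  have hsum : φ i (Finsupp.linearCombination R v l) = l i * φ i (v i) := by
    rw [Finsupp.linearCombination_apply, Finsupp.sum, map_sum, sum_eq_single_of_mem i hi]
    · simp
    · intro j hj hji
      have hij : ¬i ≤ j := fun hij ↦ hji ((hmax hj hij).antisymm hij)
      simp [htri i j hij]
  rw [hl, map_zero] at hsum
  exact mul_ne_zero (Finsupp.mem_support_iff.mp hi) (hdiag i) hsum.symm

/-- The alternating sum `∑ T ⊆ S, (-1) ^ #T * f T`, which is up to sign the value at `S` of the
Möbius inverse of `f`, as a linear functional of the set function `f`. -/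
def alternatingSum (R : Type*) [CommRing R] (S : Finset ι) : (Finset ι → R) →ₗ[R] R :=
  ∑ T ∈ S.powerset, (-1 : R) ^ #T • LinearMap.proj T

theorem alternatingSum_apply (S : Finset ι) (f : Finset ι → R) :
    alternatingSum R S f = ∑ T ∈ S.powerset, (-1) ^ #T * f T := by
  simp [alternatingSum]

variable [DecidableEq ι]

theorem alternatingSum_inter_of_subset (f : Finset ι → R) {S c : Finset ι} (h : S ⊆ c) :
    alternatingSum R S (fun D ↦ f (c ∩ D)) = alternatingSum R S f := by
  simp only [alternatingSum_apply]
  refine sum_congr rfl fun D hD ↦ ?_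
  rw [inter_eq_right.mpr ((mem_powerset.mp hD).trans h)]

theorem alternatingSum_inter_of_not_subset (f : Finset ι → R) {S c : Finset ι} (h : ¬S ⊆ c) :
    alternatingSum R S (fun D ↦ f (c ∩ D)) = 0 := by
  obtain ⟨e, heS, hec⟩ := not_subset.mp h
  rw [alternatingSum_apply, ← insert_erase heS, sum_powerset_insert (notMem_erase e S),
    ← sum_add_distrib]
  refine sum_eq_zero fun D hD ↦ ?_
  have heD : e ∉ D := fun heD ↦ notMem_erase e S (mem_powerset.mp hD heD)
  rw [card_insert_of_notMem heD, inter_insert_of_notMem hec]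
  ring

theorem linearIndependent_inter_s7 [NoZeroDivisors R] {f : Finset ι → R}
    (hf : ∀ S, alternatingSum R S f ≠ 0) :
    LinearIndependent R (fun c D : Finset ι ↦ f (c ∩ D)) :=
  linearIndependent_of_triangular_dual (alternatingSum R)
    (fun S ↦ by rw [alternatingSum_inter_of_subset f subset_rfl]; exact hf S)
    (fun _ _ ↦ alternatingSum_inter_of_not_subset f)

end IntersectionFamily

section Restriction

variable {ι κ K : Type*} [Fintype ι] [Field K] {u v : ι → κ} {w : ι → K} {β : K}
  {g : MvPolynomial κ K}

theorem aeval_indicator_restriction [DecidableEq ι] (hu : Function.Injective u)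
    (hcover : ∀ x, (∃ i, u i = x) ∨ ∃ i, v i = x)
    (hg : ∀ a : κ → K, (∀ x, a x = 0 ∨ a x = 1) →
      eval a g * (∑ i, w i * a (u i) * a (v i) - β) = 1)
    {τ : κ → MvPolynomial κ K} {c : Finset ι} (hτu : ∀ i, τ (u i) = X (u i))
    (hτv : ∀ i, τ (v i) = C (if i ∈ c then 1 else 0)) (D : Finset ι) :
    aeval (Set.indicator (u '' D) 1) (aeval τ g) = (∑ i ∈ c ∩ D, w i - β)⁻¹ := by
  let a : κ → K := fun x ↦ aeval (Set.indicator (u '' D) 1) (τ x)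
  have hau (i : ι) : a (u i) = if i ∈ D then 1 else 0 := by
    classical
    simp only [a, hτu, aeval_X, Set.indicator_apply, hu.mem_set_image, mem_coe, Pi.one_apply]
  have hav (i : ι) : a (v i) = if i ∈ c then 1 else 0 := by
    simp only [a, hτv, aeval_C, Algebra.algebraMap_self, RingHom.id_apply]
  have hbool : ∀ x, a x = 0 ∨ a x = 1 := by
    intro x
    obtain ⟨i, rfl⟩ | ⟨i, rfl⟩ := hcover x
    · rw [hau]; exact (ite_eq_or_eq _ _ _).symm
    · rw [hav]; exact (ite_eq_or_eq _ _ _).symm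
  have hsum : ∑ i, w i * a (u i) * a (v i) = ∑ i ∈ c ∩ D, w i := by
    simp_rw [hau, hav, mul_ite, mul_one, mul_zero, ← ite_and, ← mem_inter, sum_ite_mem,
      univ_inter]
  rw [comp_aeval_apply, ← hsum]
  exact eq_inv_of_mul_eq_one_left (hg a hbool)

theorem linearIndependent_restriction (hu : Function.Injective u)
    (hcover : ∀ x, (∃ i, u i = x) ∨ ∃ i, v i = x)
    (hw : ∀ S, alternatingSum K S (fun T ↦ (∑ i ∈ T, w i - β)⁻¹) ≠ 0)
    (hg : ∀ a : κ → K, (∀ x, a x = 0 ∨ a x = 1) →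
      eval a g * (∑ i, w i * a (u i) * a (v i) - β) = 1)
    {σ : (ι → Bool) → κ → MvPolynomial κ K} (hσu : ∀ c i, σ c (u i) = X (u i))
    (hσv : ∀ c i, σ c (v i) = C (if c i then 1 else 0)) :
    LinearIndependent K (fun c ↦ aeval (σ c) g) := by
  classical
  let support (c : ι → Bool) : Finset ι := {i | c i}
  have hsupport : Function.Injective support := fun c d h ↦ by
    simpa [support, Finset.ext_iff, ← Bool.eq_iff_iff, ← funext_iff] using h
  let evalIndicators : MvPolynomial κ K →ₗ[K] Finset ι → K :=
    LinearMap.pi fun D ↦ (aeval (Set.indicator (u '' D) 1)).toLinearMap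
  refine LinearIndependent.of_comp evalIndicators ?_
  have hmatrix : evalIndicators ∘ (fun c ↦ aeval (σ c) g) =
      (fun c D ↦ (∑ i ∈ c ∩ D, w i - β)⁻¹) ∘ support := funext₂ fun c D ↦
    aeval_indicator_restriction hu hcover hg (hσu c) (by simpa [support] using hσv c) D
  rw [hmatrix]
  exact (linearIndependent_inter_s7 hw).comp support hsupport

end Restriction

section Numerator

variable {ι R : Type*} [CommRing R]

theorem exists_sum_eq_C_iff_eq {β : R} (hβ : β ≠ 0) {S : Finset ι} (hS : S.Nonempty) :
    ∃ y : ι → MvPolynomial ι R, ∀ T ⊆ S, ∑ i ∈ T, y i = C β ↔ T = S := by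
  classical
  have := nontrivial_of_ne β 0 hβ
  obtain ⟨e, he⟩ := hS
  let y : ι → MvPolynomial ι R := Function.update X e (C β - ∑ i ∈ S.erase e, X i)
  have sum_y_of_notMem {T : Finset ι} (heT : e ∉ T) : ∑ i ∈ T, y i = ∑ i ∈ T, X i :=
    sum_update_of_notMem heT _ _
  have sum_y_self : ∑ i ∈ S, y i = C β := by
    rw [← add_sum_erase S y he, sum_y_of_notMem (notMem_erase e S)]
    simp [y]
  refine ⟨y, fun T hTS ↦ ⟨fun hT ↦ ?_, fun h ↦ h ▸ sum_y_self⟩⟩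
  by_cases heT : e ∈ T
  · have hsdiff : ∑ i ∈ S \ T, (X i : MvPolynomial ι R) = 0 := by
      rw [← sum_y_of_notMem (by simp [heT]), sum_sdiff_eq_sub hTS, hT, sum_y_self, sub_self]
    refine hTS.antisymm fun j hjS ↦ by_contra fun hjT ↦ ?_
    simpa [Pi.single_apply, hjS, hjT] using congrArg (eval (Pi.single j 1)) hsdiff
  · rw [sum_y_of_notMem heT] at hT
    have hzero : 0 = β := by simpa using congrArg (eval 0) hT
    exact absurd hzero.symm hβ

variable [DecidableEq ι]

/-- The numerator of `∑ T ⊆ S, (-1) ^ #T / (∑ i ∈ T, X i - β)` over the common denominator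
`∏ T ⊆ S, (∑ i ∈ T, X i - β)`. -/
noncomputable def alternatingSumNumerator (β : R) (S : Finset ι) : MvPolynomial ι R :=
  ∑ T ∈ S.powerset, (-1) ^ #T * ∏ T' ∈ S.powerset.erase T, (∑ i ∈ T', X i - C β)

theorem eval_alternatingSumNumerator {K : Type*} [Field K] {β : K} {a : ι → K} {S : Finset ι}
    (ha : ∀ T ⊆ S, ∑ i ∈ T, a i ≠ β) :
    eval a (alternatingSumNumerator β S) =
      alternatingSum K S (fun T ↦ (∑ i ∈ T, a i - β)⁻¹) *
        ∏ T ∈ S.powerset, (∑ i ∈ T, a i - β) := by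
  simp only [alternatingSumNumerator, alternatingSum_apply, map_sum, map_mul, map_pow, map_neg,
    map_one, map_prod, map_sub, eval_X, eval_C, sum_mul]
  refine sum_congr rfl fun T hT ↦ ?_
  have hne : ∑ i ∈ T, a i - β ≠ 0 := sub_ne_zero.mpr (ha T (mem_powerset.mp hT))
  rw [← mul_prod_erase _ _ hT, mul_assoc, inv_mul_cancel_left₀ hne]

theorem totalDegree_alternatingSumNumerator_le (β : R) (S : Finset ι) :
    (alternatingSumNumerator β S).totalDegree ≤ 2 ^ #S := by
  have factor_le (T : Finset ι) : (∑ i ∈ T, X i - C β : MvPolynomial ι R).totalDegree ≤ 1 :=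
    (totalDegree_sub_C_le _ _).trans <| totalDegree_finsetSum_le fun i _ ↦
      (totalDegree_monomial_le _ _).trans (by simp)
  refine totalDegree_finsetSum_le fun T _ ↦ ?_
  calc ((-1) ^ #T * ∏ T' ∈ S.powerset.erase T, (∑ i ∈ T', X i - C β)).totalDegree
      = ((-1 : R) ^ #T • ∏ T' ∈ S.powerset.erase T, (∑ i ∈ T', X i - C β)).totalDegree := by
        simp [smul_eq_C_mul]
    _ ≤ (∏ T' ∈ S.powerset.erase T, (∑ i ∈ T', X i - C β)).totalDegree := totalDegree_smul_le _ _
    _ ≤ ∑ T' ∈ S.powerset.erase T, (∑ i ∈ T', X i - C β : MvPolynomial ι R).totalDegree :=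
        totalDegree_finsetProd _ _
    _ ≤ #(S.powerset.erase T) := by simpa using sum_le_card_nsmul _ _ 1 fun T' _ ↦ factor_le T'
    _ ≤ 2 ^ #S := card_powerset S ▸ card_erase_le

theorem alternatingSumNumerator_ne_zero [IsDomain R] {β : R} (hβ : β ≠ 0) (S : Finset ι) :
    alternatingSumNumerator β S ≠ 0 := by
  obtain rfl | hS := S.eq_empty_or_nonempty
  · simp [alternatingSumNumerator]
  obtain ⟨y, hy⟩ := exists_sum_eq_C_iff_eq hβ hS
  have hfactor {T : Finset ι} (hT : T ⊆ S) : ∑ i ∈ T, y i - C β = 0 ↔ T = S :=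
    sub_eq_zero.trans (hy T hT)
  have haeval : aeval y (alternatingSumNumerator β S) =
      (-1) ^ #S * ∏ T ∈ S.powerset.erase S, (∑ i ∈ T, y i - C β) := by
    simp only [alternatingSumNumerator, map_sum, map_mul, map_pow, map_neg, map_one, map_prod,
      map_sub, aeval_X, aeval_C, algebraMap_eq]
    refine sum_eq_single_of_mem S (mem_powerset_self S) fun T _ hTS ↦ ?_
    have hS_mem : S ∈ S.powerset.erase T := mem_erase.mpr ⟨hTS.symm, mem_powerset_self S⟩
    rw [prod_eq_zero hS_mem ((hfactor subset_rfl).mpr rfl), mul_zero]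
  have hprod : ∏ T ∈ S.powerset.erase S, (∑ i ∈ T, y i - C β) ≠ 0 :=
    prod_ne_zero_iff.mpr fun T hT ↦
      have ⟨hne, hsub⟩ := mem_erase.mp hT
      (hfactor (mem_powerset.mp hsub)).not.mpr hne
  intro hzero
  rw [hzero, map_zero] at haeval
  exact mul_ne_zero (pow_ne_zero _ (neg_ne_zero.mpr one_ne_zero)) hprod haeval.symm

end Numerator

theorem exists_forall_eval_ne_zero {σ κ R : Type*} [Finite σ] [Finite κ] [CommRing R] [IsDomain R]
    {P : κ → MvPolynomial σ R} (hP : ∀ j, P j ≠ 0) {d : ℕ} (hdeg : ∀ j, (P j).totalDegree ≤ d)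
    {S : Finset R} (hS : Nat.card κ * d < #S) :
    ∃ a : σ → R, (∀ i, a i ∈ S) ∧ ∀ j, eval a (P j) ≠ 0 := by
  have := Fintype.ofFinite κ
  have hprod : ∏ j, P j ≠ 0 := prod_ne_zero_iff.mpr fun j _ ↦ hP j
  have hdegree : (∏ j, P j).totalDegree < #S :=
    calc (∏ j, P j).totalDegree ≤ ∑ j, (P j).totalDegree := totalDegree_finsetProd _ _
      _ ≤ Nat.card κ * d := by simpa using sum_le_card_nsmul univ _ d fun j _ ↦ hdeg j
      _ < #S := hS
  by_contra! hvanish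
  refine hprod (eq_zero_of_eval_zero_at_prod_finset _ (fun _ ↦ S)
    (fun i ↦ (degreeOf_le_totalDegree _ i).trans_lt hdegree) fun a ha ↦ ?_)
  obtain ⟨j, hj⟩ := hvanish a ha
  rw [map_prod]
  exact prod_eq_zero (mem_univ j) hj

section ComplementaryPairs

variable {κ : Type*} [LinearOrder κ]

/-- The ways to list the elements of `κ` as `u 0 < ⋯ < u (m - 1)` and `v 0 < ⋯ < v (n - 1)`, that
is, the ordered partitions of `κ` into a set of size `m` and a set of size `n`. -/
abbrev ComplementaryPair (m n : ℕ) (κ : Type*) [LinearOrder κ] : Type _ :=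
  {p : (Fin m ↪o κ) × (Fin n ↪o κ) // IsCompl (Set.range p.1) (Set.range p.2)}

instance ComplementaryPair.finite (m n : ℕ) [Finite κ] : Finite (ComplementaryPair m n κ) :=
  have (k : ℕ) : Finite (Fin k ↪o κ) := DFunLike.finite _
  inferInstance

/-- The matched pair `{u i, v i}`, encoded with its smaller element first, so that the weight
`α_{u i, v i}` is the value of `α` at it. -/
def ComplementaryPair.edge {n : ℕ} (p : ComplementaryPair n n κ) (i : Fin n) : κ × κ :=
  (min (p.1.1 i) (p.1.2 i), max (p.1.1 i) (p.1.2 i))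

theorem ComplementaryPair.edge_injective {n : ℕ} (p : ComplementaryPair n n κ) :
    Function.Injective p.edge := by
  have hdisjoint := Set.disjoint_range_iff.mp p.2.disjoint
  refine Function.Injective.of_comp (f := Prod.fst) fun i j (hij : min _ _ = min _ _) ↦ ?_
  rcases min_choice (p.1.1 i) (p.1.2 i) with hi | hi <;>
    rcases min_choice (p.1.1 j) (p.1.2 j) with hj | hj <;> rw [hi, hj] at hij
  · exact p.1.1.injective hij
  · exact absurd hij (hdisjoint i j)
  · exact absurd hij.symm (hdisjoint j i)
  · exact p.1.2.injective hij

theorem card_complementaryPair_le (m n : ℕ) [Finite κ] :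
    Nat.card (ComplementaryPair m n κ) ≤ (Nat.card κ).choose m := by
  have : Finite (Fin m ↪o κ) := DFunLike.finite _
  have hinj : Function.Injective fun p : ComplementaryPair m n κ ↦ p.1.1 := by
    rintro ⟨⟨u, v⟩, huv⟩ ⟨⟨u', v'⟩, huv'⟩ (rfl : u = u')
    obtain rfl : v = v' := OrderEmbedding.range_inj.mp (huv.right_unique huv')
    rfl
  calc Nat.card (ComplementaryPair m n κ) ≤ Nat.card (Fin m ↪o κ) :=
        Nat.card_le_card_of_injective _ hinj
    _ = Nat.card (Set.powersetCard κ m) := Nat.card_congr Set.powersetCard.ofFinEmbEquiv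
    _ = (Nat.card κ).choose m := Set.powersetCard.card κ m

end ComplementaryPairs

theorem exists_alternatingSum_ne_zero {κ K : Type*} [LinearOrder κ] [Finite κ] [Field K] {β : K}
    {S : Finset K} (hβ : β ∉ AddSubmonoid.closure (S : Set K)) (m : ℕ)
    (hS : (Nat.card κ).choose m * 2 ^ (2 * m) < #S) :
    ∃ α : κ × κ → K, (∀ t, α t ∈ S) ∧ ∀ p : ComplementaryPair m m κ, ∀ T : Finset (Fin m),
      alternatingSum K T (fun D ↦ (∑ i ∈ D, α (p.edge i) - β)⁻¹) ≠ 0 := by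
  let P (q : ComplementaryPair m m κ × Finset (Fin m)) : MvPolynomial (κ × κ) K :=
    rename q.1.edge (alternatingSumNumerator β q.2)
  have P_ne_zero q : P q ≠ 0 := by
    have hβ0 : β ≠ 0 := fun h ↦ hβ (h ▸ zero_mem _)
    exact (map_ne_zero_iff _ (rename_injective _ q.1.edge_injective)).mpr
      (alternatingSumNumerator_ne_zero hβ0 q.2)
  have totalDegree_P_le q : (P q).totalDegree ≤ 2 ^ m :=
    calc (P q).totalDegree ≤ (alternatingSumNumerator β q.2).totalDegree :=
          totalDegree_rename_le _ _
      _ ≤ 2 ^ #q.2 := totalDegree_alternatingSumNumerator_le β q.2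
      _ ≤ 2 ^ m := Nat.pow_le_pow_right two_pos ((card_le_univ q.2).trans_eq (Fintype.card_fin m))
  have hcard : Nat.card (ComplementaryPair m m κ × Finset (Fin m)) * 2 ^ m < #S := by
    have hindex : Nat.card (ComplementaryPair m m κ × Finset (Fin m)) ≤
        (Nat.card κ).choose m * 2 ^ m := by
      simpa [Nat.card_prod] using Nat.mul_le_mul_right (2 ^ m) (card_complementaryPair_le m m)
    calc Nat.card (ComplementaryPair m m κ × Finset (Fin m)) * 2 ^ m
        ≤ (Nat.card κ).choose m * 2 ^ m * 2 ^ m := Nat.mul_le_mul_right _ hindex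
      _ = (Nat.card κ).choose m * 2 ^ (2 * m) := by ring
      _ < #S := hS
  obtain ⟨α, hαS, hα⟩ := exists_forall_eval_ne_zero P_ne_zero totalDegree_P_le hcard
  refine ⟨α, hαS, fun p T hzero ↦ hα (p, T) ?_⟩
  have hne : ∀ D ⊆ T, ∑ i ∈ D, (α ∘ p.edge) i ≠ β := fun D _ h ↦
    hβ (h ▸ sum_mem fun i _ ↦ AddSubmonoid.subset_closure (hαS (p.edge i)))
  rw [eval_rename, eval_alternatingSumNumerator hne]
  exact mul_eq_zero_of_left hzero _

theorem evaluation_dimension_lower_bound_any_partition_general (n : ℕ) {K : Type*} [Field K]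
    {S : Finset K} (hS : (2 * n).choose n * 2 ^ (2 * n) < #S) {β : K}
    (hβ : β ∉ AddSubmonoid.closure (S : Set K)) :
    ∃ α : Fin (2 * n) → Fin (2 * n) → K, (∀ i j, α i j ∈ S) ∧
      ∀ u v : Fin n → Fin (2 * n), StrictMono u → StrictMono v →
        (∀ x, (∃ i, u i = x) ∨ ∃ i, v i = x) → (∀ i j, u i ≠ v j) →
        ∀ g : MvPolynomial (Fin (2 * n)) K,
          (∀ a : Fin (2 * n) → K, (∀ x, a x = 0 ∨ a x = 1) →
            eval a g * (∑ i, α (min (u i) (v i)) (max (u i) (v i)) * a (u i) * a (v i) - β) = 1) →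
          ∀ σ : (Fin n → Bool) → Fin (2 * n) → MvPolynomial (Fin (2 * n)) K,
            (∀ c i, σ c (u i) = X (u i)) → (∀ c i, σ c (v i) = C (if c i then 1 else 0)) →
            2 ^ n ≤ Module.finrank K
              (Submodule.span K (Set.range fun c : Fin n → Bool ↦ aeval (σ c) g)) := by
  obtain ⟨α, hαS, hα⟩ :=
    exists_alternatingSum_ne_zero (κ := Fin (2 * n)) hβ n (by simpa using hS)
  refine ⟨fun i j ↦ α (i, j), fun i j ↦ hαS (i, j), ?_⟩
  intro u v hu hv hcover hdisjoint g hg σ hσu hσv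
  have hcompl : IsCompl (Set.range u) (Set.range v) :=
    ⟨Set.disjoint_range_iff.mpr hdisjoint,
      codisjoint_iff_le_sup.mpr fun x _ ↦ hcover x⟩
  let p : ComplementaryPair n n (Fin (2 * n)) :=
    ⟨(.ofStrictMono u hu, .ofStrictMono v hv), hcompl⟩
  have hindep : LinearIndependent K (fun c ↦ aeval (σ c) g) :=
    linearIndependent_restriction hu.injective hcover (hα p) hg hσu hσv
  rw [finrank_span_eq_card hindep]
  simp

/-- Evaluation-dimension lower bound for every balanced partition:
for `p` prime, `p^k > C(2n,n)·2^{2n}`, a finite field `F'` of size `p^{2k}` with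
subfield `F` of size `p^k`, and `β ∈ F' \ F`, there is a family
`α = (α_{i,j})` of elements of `F` such that for every partition of the `2n` variables
into increasing lists `u` and `v` of length `n`, the multilinear polynomial `g` agreeing
with `1/(∑ k, α_{u k, v k} * x_{u k} * x_{v k} - β)` on the Boolean cube has the
property that the span of the `2^n` polynomials obtained from `g` by substituting
Boolean constants for the variables `x_{v k}` has dimension at least `2^n`. -/
theorem evaluation_dimension_lower_bound_any_partition
    (n : ℕ) (p : ℕ) (hp : p.Prime) (k : ℕ)
    (hpk : Nat.choose (2 * n) n * 2 ^ (2 * n) < p ^ k)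
    (F' : Type*) [Field F'] [Fintype F'] (hcard : Fintype.card F' = p ^ (2 * k))
    (F : Subfield F') (hFcard : Nat.card F = p ^ k)
    (β : F') (hβ : β ∉ F) :
    ∃ α : Fin (2 * n) → Fin (2 * n) → F', (∀ i j, α i j ∈ F) ∧
      ∀ u v : Fin n → Fin (2 * n), StrictMono u → StrictMono v →
        (∀ x : Fin (2 * n), (∃ k', u k' = x) ∨ (∃ k', v k' = x)) →
        (∀ k' l, u k' ≠ v l) →
        ∀ g : MvPolynomial (Fin (2 * n)) F',
          (∀ x, g.degreeOf x ≤ 1) →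
          (∀ a : Fin (2 * n) → F', (∀ x, a x = 0 ∨ a x = 1) →
            MvPolynomial.eval a g *
              ((∑ k' : Fin n,
                α (min (u k') (v k')) (max (u k') (v k')) * a (u k') * a (v k')) - β) = 1) →
          ∀ σ : (Fin n → Bool) → Fin (2 * n) → MvPolynomial (Fin (2 * n)) F',
            (∀ c k', σ c (u k') = MvPolynomial.X (u k')) →
            (∀ c k', σ c (v k') = MvPolynomial.C (if c k' then (1 : F') else 0)) →
            2 ^ n ≤ Module.finrank F' ↥(Submodule.span F'
              (Set.range fun c : Fin n → Bool => MvPolynomial.aeval (σ c) g)) := by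
  classical
  obtain ⟨α, hα, hdim⟩ := evaluation_dimension_lower_bound_any_partition_general n
    (S := (F : Set F').toFinset) (by simpa [← hFcard, ← Nat.card_eq_fintype_card] using hpk)
    (fun h ↦ hβ (AddSubmonoid.mem_closure.mp h F.toAddSubgroup.toAddSubmonoid (by simp)))
  exact ⟨α, by simpa using hα, fun u v hu hv hcov hdis g _ ↦ hdim u v hu hv hcov hdis g⟩
end

section
/- Let p be a prime and k, n ≥ 1. Let F be a field of characteristic p containing a subfield F₀ with exactly p^k elements. Let α_1,…,α_n ∈ F₀, let β ∈ F \ F₀, and set L(x) = Σ_{i=1}^n α_i x_i − β. Then L has no zero in {0,1}^n, and there exist polynomials A, B_1,…,B_n ∈ F[x_1,…,x_n] such that A·L + Σ_{i=1}^n B_i·(x_i² − x_i) = 1, with deg A ≤ k(p−1) and deg B_i ≤ k(p−1) for every i. -/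
/-! Put `ℓⱼ = ∑ i, αᵢ^(p^j) xᵢ - β^(p^j)`, so that `L = ℓ₀`. Frobenius is additive and `xᵢ^p ≡ xᵢ`
modulo the Boolean axioms, so `ℓⱼ^p ≡ ℓⱼ₊₁` and multiplying `L` by `P = ∏_{j < k} ℓⱼ^(p-1)`
telescopes to `P * L ≡ ℓₖ`. As the `αᵢ` are fixed by `x ↦ x^(p^k)`, the polynomials `ℓₖ` and `L`
differ by the constant `c = β - β^(p^k)`, whence `(P - 1) * L ≡ c`. Since `F₀` contains all the
roots of `x^(p^k) - x`, this constant is nonzero, and `A = c⁻¹ (P - 1)` satisfies `A * L ≡ 1`. -/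

open MvPolynomial

theorem mem_subfield_iff_pow_natCard_eq_self {F : Type*} [Field F] (K : Subfield F) [Finite K]
    {x : F} : x ∈ K ↔ x ^ Nat.card K = x := by
  have := Fintype.ofFinite K
  rw [Nat.card_eq_fintype_card]
  refine ⟨fun hx => congrArg Subtype.val (FiniteField.pow_card (⟨x, hx⟩ : K)), fun hx => ?_⟩
  have hsplits : (Polynomial.X ^ Fintype.card K - Polynomial.X : Polynomial K).Splits := by
    simpa using (FiniteField.isSplittingField_sub K K).splits
  exact hsplits.mem_subfield_of_isRoot K
    (FiniteField.X_pow_card_sub_X_ne_zero K Fintype.one_lt_card) (by simp [hx])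

theorem pow_succ_sub_self_eq_geom_sum_mul {R : Type*} [CommRing R] (x : R) (n : ℕ) :
    x ^ (n + 1) - x = (∑ m ∈ Finset.range n, x ^ m) * (x ^ 2 - x) := by
  linear_combination -x * geom_sum_mul x n

theorem totalDegree_C_mul_geom_sum_X_le {σ R : Type*} [CommSemiring R] (c : R) (i : σ) (n : ℕ) :
    (C c * ∑ m ∈ Finset.range n, X i ^ m : MvPolynomial σ R).totalDegree ≤ n := by
  rw [Finset.mul_sum]
  refine totalDegree_finsetSum_le fun m hm => ?_
  rw [C_mul_X_pow_eq_monomial]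
  refine (totalDegree_monomial_le _ _).trans ?_
  simpa using (Finset.mem_range.mp hm).le

section BooleanAxioms

variable {σ R : Type*} [Fintype σ] [CommRing R]

/-- Congruence of polynomials modulo the Boolean axioms `X i ^ 2 - X i`, witnessed by coefficients
of total degree at most `d`. The bound is on the coefficients `B i` alone, not on the products
`B i * (X i ^ 2 - X i)`. -/
def BooleanCongr (d : ℕ) (f g : MvPolynomial σ R) : Prop :=
  ∃ B : σ → MvPolynomial σ R,
    f + ∑ i, B i * (X i ^ 2 - X i) = g ∧ ∀ i, (B i).totalDegree ≤ d

namespace BooleanCongr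

variable {d e : ℕ} {f g h : MvPolynomial σ R}

theorem refl (d : ℕ) (f : MvPolynomial σ R) : BooleanCongr d f f :=
  ⟨0, by simp, by simp⟩

theorem mono (hde : d ≤ e) (hfg : BooleanCongr d f g) : BooleanCongr e f g :=
  let ⟨B, hB, hdeg⟩ := hfg
  ⟨B, hB, fun i => (hdeg i).trans hde⟩

theorem trans (hfg : BooleanCongr d f g) (hgh : BooleanCongr d g h) : BooleanCongr d f h := by
  obtain ⟨B, rfl, hB⟩ := hfg
  obtain ⟨B', rfl, hB'⟩ := hgh
  refine ⟨B + B', ?_, fun i => (totalDegree_add _ _).trans (max_le (hB i) (hB' i))⟩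
  simp only [Pi.add_apply, add_mul, Finset.sum_add_distrib, add_assoc]

theorem sub_right (hfg : BooleanCongr d f g) (h : MvPolynomial σ R) :
    BooleanCongr d (f - h) (g - h) := by
  obtain ⟨B, rfl, hB⟩ := hfg
  exact ⟨B, by ring, hB⟩

theorem mul_left (hh : h.totalDegree ≤ e) (hfg : BooleanCongr d f g) :
    BooleanCongr (e + d) (h * f) (h * g) := by
  obtain ⟨B, rfl, hB⟩ := hfg
  refine ⟨fun i => h * B i, ?_, fun i => (totalDegree_mul _ _).trans (add_le_add hh (hB i))⟩
  simp only [mul_add, Finset.mul_sum, mul_assoc]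

theorem eval_eq (hfg : BooleanCongr d f g) {a : σ → R} (ha : ∀ i, a i ^ 2 = a i) :
    eval a f = eval a g := by
  obtain ⟨B, rfl, -⟩ := hfg
  simp [ha]

end BooleanCongr

/-- The subset-sum polynomial `∑ i, αᵢ xᵢ - β`; note the sign of the constant term. -/
noncomputable def affineForm (α : σ → R) (β : R) : MvPolynomial σ R :=
  (∑ i, C (α i) * X i) - C β

theorem affineForm_sub_affineForm (α : σ → R) (β γ : R) :
    affineForm α β - affineForm α γ = C (γ - β) := by
  simp [affineForm]

theorem totalDegree_affineForm_le (α : σ → R) (β : R) : (affineForm α β).totalDegree ≤ 1 := by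
  refine (totalDegree_sub _ _).trans (max_le (totalDegree_finsetSum_le fun i _ => ?_) (by simp))
  simpa [C_mul_X_eq_monomial] using totalDegree_monomial_le (Finsupp.single i 1) (α i)

theorem totalDegree_affineForm_pow_le (α : σ → R) (β : R) (m : ℕ) :
    (affineForm α β ^ m).totalDegree ≤ m :=
  (totalDegree_pow _ _).trans (mul_le_of_le_one_right' (totalDegree_affineForm_le α β))

theorem totalDegree_prod_affineForm_pow_le (α : ℕ → σ → R) (β : ℕ → R) (k m : ℕ) :
    (∏ j ∈ Finset.range k, affineForm (α j) (β j) ^ m).totalDegree ≤ k * m := by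
  refine (totalDegree_finsetProd _ _).trans ?_
  simpa using Finset.sum_le_card_nsmul (Finset.range k) _ m
    fun j _ => totalDegree_affineForm_pow_le (α j) (β j) m

section Frobenius

variable (p : ℕ) [ExpChar R p]

theorem affineForm_pow_expChar (α : σ → R) (β : R) :
    affineForm α β ^ p = (∑ i, C (α i ^ p) * X i ^ p) - C (β ^ p) := by
  rw [affineForm, sub_pow_expChar, ← frobenius_def p (∑ i, _), map_sum]
  simp only [frobenius_def, mul_pow, map_pow]

theorem booleanCongr_affineForm_pow_expChar (α : σ → R) (β : R) :
    BooleanCongr (p - 1) (affineForm α β ^ p) (affineForm (α ^ p) (β ^ p)) := by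
  refine ⟨fun i => C (-α i ^ p) * ∑ m ∈ Finset.range (p - 1), X i ^ m, ?_, fun i =>
    totalDegree_C_mul_geom_sum_X_le _ _ _⟩
  have hp : p - 1 + 1 = p := Nat.sub_add_cancel (expChar_pos R p)
  simp only [mul_assoc, ← pow_succ_sub_self_eq_geom_sum_mul, hp]
  rw [affineForm_pow_expChar, sub_add_eq_add_sub, ← Finset.sum_add_distrib]
  simp [affineForm, mul_sub]

theorem booleanCongr_prod_affineForm_pow_mul (α : σ → R) (β : R) (k : ℕ) :
    BooleanCongr (k * (p - 1))
      ((∏ j ∈ Finset.range k, affineForm (α ^ p ^ j) (β ^ p ^ j) ^ (p - 1)) * affineForm α β)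
      (affineForm (α ^ p ^ k) (β ^ p ^ k)) := by
  induction k with
  | zero => simpa using BooleanCongr.refl 0 (affineForm α β)
  | succ k ih =>
    set ℓ := affineForm (α ^ p ^ k) (β ^ p ^ k)
    have hmul := ih.mul_left (h := ℓ ^ (p - 1)) (totalDegree_affineForm_pow_le _ _ _)
    have hfrob : BooleanCongr (p - 1) (ℓ ^ (p - 1) * ℓ)
        (affineForm (α ^ p ^ (k + 1)) (β ^ p ^ (k + 1))) := by
      rw [pow_sub_one_mul (expChar_pos R p).ne', pow_succ p, pow_mul, pow_mul]
      exact booleanCongr_affineForm_pow_expChar p _ _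
    rw [Finset.prod_range_succ_comm, mul_assoc, add_one_mul, add_comm (k * _)]
    exact hmul.trans (hfrob.mono (Nat.le_add_right _ _))

theorem exists_mul_affineForm_booleanCongr_one (k : ℕ) (α : σ → R) (hα : α ^ p ^ k = α) (β : R)
    (hβ : IsUnit (β - β ^ p ^ k)) :
    ∃ A : MvPolynomial σ R, A.totalDegree ≤ k * (p - 1) ∧
      BooleanCongr (k * (p - 1)) (A * affineForm α β) 1 := by
  obtain ⟨c, hc⟩ := hβ
  set P := ∏ j ∈ Finset.range k, affineForm (α ^ p ^ j) (β ^ p ^ j) ^ (p - 1)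
  have hP : P.totalDegree ≤ k * (p - 1) := totalDegree_prod_affineForm_pow_le _ _ k (p - 1)
  have hconst : BooleanCongr (k * (p - 1)) ((P - 1) * affineForm α β) (C (c : R)) := by
    have := (booleanCongr_prod_affineForm_pow_mul p α β k).sub_right (affineForm α β)
    rwa [hα, affineForm_sub_affineForm, ← hc, ← sub_one_mul] at this
  refine ⟨C c⁻¹.val * (P - 1), ?_, ?_⟩
  · refine (totalDegree_mul _ _).trans ?_
    rw [totalDegree_C, zero_add]
    exact (totalDegree_sub _ _).trans (max_le hP (by simp))
  · have := hconst.mul_left (totalDegree_C (σ := σ) c⁻¹.val).le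
    rwa [zero_add, ← mul_assoc, ← C_mul, Units.inv_mul, C_1] at this

theorem nullstellensatz_certificate_linear_positive_char_general
    (k : ℕ) (α : σ → R) (hα : α ^ p ^ k = α) (β : R) (hβ : IsUnit (β - β ^ p ^ k)) :
    (∀ a : σ → R, (∀ i, a i ^ 2 = a i) →
      IsUnit (eval a ((∑ i, C (α i) * X i) - C β))) ∧
    ∃ (A : MvPolynomial σ R) (B : σ → MvPolynomial σ R),
      A * ((∑ i, C (α i) * X i) - C β) + ∑ i, B i * (X i ^ 2 - X i) = 1 ∧
      A.totalDegree ≤ k * (p - 1) ∧ ∀ i, (B i).totalDegree ≤ k * (p - 1) := by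
  obtain ⟨A, hA, hcongr⟩ := exists_mul_affineForm_booleanCongr_one p k α hα β hβ
  refine ⟨fun a ha => ?_, ?_⟩
  · have heval : eval a A * eval a (affineForm α β) = 1 := by simpa using hcongr.eval_eq ha
    exact .of_mul_eq_one_right _ heval
  · obtain ⟨B, hB, hBdeg⟩ := hcongr
    exact ⟨A, B, hB, hA, hBdeg⟩

end Frobenius

end BooleanAxioms

/-- Constant-degree Nullstellensatz refutation of an unsatisfiable
linear polynomial over positive characteristic: if `F` has characteristic `p`,
contains a subfield `F₀` of size `p^k`, all `α i ∈ F₀` and `β ∉ F₀`, then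
`L = ∑ i, α i * x i - β` has no Boolean zero and there is a certificate
`A·L + ∑ i, B i·(x i² - x i) = 1` with `deg A ≤ k(p-1)` and `deg (B i) ≤ k(p-1)`. -/
theorem nullstellensatz_certificate_linear_positive_char
    (p : ℕ) (hp : p.Prime) (k n : ℕ) (hk : 1 ≤ k) (hn : 1 ≤ n)
    (F : Type*) [Field F] [CharP F p]
    (F₀ : Subfield F) (hF₀ : Nat.card F₀ = p ^ k)
    (α : Fin n → F) (hα : ∀ i, α i ∈ F₀) (β : F) (hβ : β ∉ F₀) :
    (∀ a : Fin n → F, (∀ i, a i = 0 ∨ a i = 1) →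
      MvPolynomial.eval a
        ((∑ i, MvPolynomial.C (α i) * MvPolynomial.X i) - MvPolynomial.C β) ≠ 0) ∧
    ∃ (A : MvPolynomial (Fin n) F) (B : Fin n → MvPolynomial (Fin n) F),
      A * ((∑ i, MvPolynomial.C (α i) * MvPolynomial.X i) - MvPolynomial.C β) +
          ∑ i, B i * (MvPolynomial.X i ^ 2 - MvPolynomial.X i) = 1 ∧
      A.totalDegree ≤ k * (p - 1) ∧ ∀ i, (B i).totalDegree ≤ k * (p - 1) := by
  have : ExpChar F p := .prime hp
  have : Finite F₀ := Nat.finite_of_card_ne_zero (hF₀ ▸ (pow_pos hp.pos k).ne')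
  have hmem {x : F} : x ∈ F₀ ↔ x ^ p ^ k = x := hF₀ ▸ mem_subfield_iff_pow_natCard_eq_self F₀
  obtain ⟨hunit, hcert⟩ := nullstellensatz_certificate_linear_positive_char_general p k α
    (funext fun i => hmem.1 (hα i)) β (sub_ne_zero.2 fun h => hβ (hmem.2 h.symm)).isUnit
  exact ⟨fun a ha => (hunit a fun i => by rcases ha i with h | h <;> simp [h]).ne_zero, hcert⟩
end

section
/- Let p be a prime, F a field of characteristic p, and α_1,…,α_n, β ∈ F. Set L_0(x) = Σ_{i=1}^n α_i x_i − β and, for each integer j ≥ 1, L_j(x) = Σ_{i=1}^n α_i^{p^j} x_i − β^{p^j}. Then for every j ≥ 1 there exist polynomials A_j, B_{j,1},…,B_{j,n} ∈ F[x_1,…,x_n] such that L_j = A_j·L_0 + Σ_{i=1}^n B_{j,i}·(x_i^p − x_i), with deg A_j ≤ j(p−1) and deg B_{j,i} ≤ j(p−1) for every i. -/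
/-!
Frobenius raises an affine linear polynomial `L = ∑ αᵢ xᵢ - β` to `L ^ p = ∑ αᵢ ^ p xᵢ ^ p - β ^ p`,
and replacing each `xᵢ ^ p` by `xᵢ` turns this into the twist of `L`. Hence
`L_{j+1} = L_j ^ (p - 1) * L_j - ∑ αᵢ ^ p ^ (j + 1) * (xᵢ ^ p - xᵢ)`, and substituting the
expression already found for the last factor `L_j` costs only `p - 1` in the degrees.
-/

section AffinePolynomial

open MvPolynomial

variable {σ R : Type*} [Fintype σ] [CommRing R]

/-- The affine linear polynomial `∑ i, α i * x i - β`. With the pointwise power of `α`, its `j`-th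
Frobenius twist is `affinePolynomial (α ^ p ^ j) (β ^ p ^ j)`. -/
noncomputable def affinePolynomial (α : σ → R) (β : R) : MvPolynomial σ R :=
  (∑ i, C (α i) * X i) - C β

lemma totalDegree_affinePolynomial_le (α : σ → R) (β : R) :
    (affinePolynomial α β).totalDegree ≤ 1 := by
  have term_le (i : σ) : (C (α i) * X i : MvPolynomial σ R).totalDegree ≤ 1 := by
    rw [C_mul_X_eq_monomial]
    exact (totalDegree_monomial_le _ _).trans (by simp)
  refine (totalDegree_sub_C_le _ _).trans ?_
  exact totalDegree_finsetSum_le fun i _ => term_le i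

lemma totalDegree_affinePolynomial_pow_mul_le (α : σ → R) (β : R) (k : ℕ)
    {q : MvPolynomial σ R} {d : ℕ} (hq : q.totalDegree ≤ d) :
    (affinePolynomial α β ^ k * q).totalDegree ≤ k + d := by
  refine (totalDegree_mul _ _).trans (add_le_add ?_ hq)
  calc (affinePolynomial α β ^ k).totalDegree
      ≤ k * (affinePolynomial α β).totalDegree := totalDegree_pow _ _
    _ ≤ k * 1 := Nat.mul_le_mul_left k (totalDegree_affinePolynomial_le α β)
    _ = k := mul_one k

lemma affinePolynomial_pow_expChar (p : ℕ) [ExpChar R p] (α : σ → R) (β : R) :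
    affinePolynomial α β ^ p =
      affinePolynomial (α ^ p) (β ^ p) + ∑ i, C (α i ^ p) * (X i ^ p - X i) := by
  have frobenius_expand : affinePolynomial α β ^ p = (∑ i, C (α i ^ p) * X i ^ p) - C (β ^ p) := by
    simp only [affinePolynomial, sub_pow_expChar, sum_pow_char p, mul_pow, C_pow]
  rw [frobenius_expand, affinePolynomial]
  simp only [Pi.pow_apply, mul_sub, Finset.sum_sub_distrib]
  ring

end AffinePolynomial

section FrobeniusTwist

open MvPolynomial

variable {σ R : Type*} [Fintype σ] [CommRing R] (p : ℕ) (α : σ → R) (β : R)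

/-- The cofactor `A_j` of `L_0` in the expression of the `j`-th Frobenius twist `L_j`; unfolding the
recursion, `A_j = ∏ k < j, L_k ^ (p - 1)`. -/
noncomputable def linearCofactor : ℕ → MvPolynomial σ R
  | 0 => 1
  | j + 1 => affinePolynomial (α ^ p ^ j) (β ^ p ^ j) ^ (p - 1) * linearCofactor j

/-- The cofactor `B_{j,i}` of `x i ^ p - x i` in the expression of the `j`-th Frobenius twist
`L_j`. -/
noncomputable def frobeniusCofactor : ℕ → σ → MvPolynomial σ R
  | 0, _ => 0
  | j + 1, i => affinePolynomial (α ^ p ^ j) (β ^ p ^ j) ^ (p - 1) * frobeniusCofactor j i -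
      C (α i ^ p ^ (j + 1))

lemma totalDegree_linearCofactor_le (j : ℕ) :
    (linearCofactor p α β j).totalDegree ≤ j * (p - 1) := by
  induction j with
  | zero => simp [linearCofactor]
  | succ j ih =>
    rw [linearCofactor, Nat.succ_mul, add_comm]
    exact totalDegree_affinePolynomial_pow_mul_le _ _ _ ih

lemma totalDegree_frobeniusCofactor_succ_le (j : ℕ) (i : σ) :
    (frobeniusCofactor p α β (j + 1) i).totalDegree ≤ j * (p - 1) := by
  induction j with
  | zero =>
    simpa only [frobeniusCofactor, totalDegree_zero, zero_mul, mul_zero] using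
      totalDegree_sub_C_le (0 : MvPolynomial σ R) (α i ^ p ^ 1)
  | succ j ih =>
    rw [frobeniusCofactor, Nat.succ_mul, add_comm (j * _)]
    exact (totalDegree_sub_C_le _ _).trans (totalDegree_affinePolynomial_pow_mul_le _ _ _ ih)

lemma affinePolynomial_frobeniusTwist_succ [ExpChar R p] (j : ℕ) :
    affinePolynomial (α ^ p ^ (j + 1)) (β ^ p ^ (j + 1)) =
      affinePolynomial (α ^ p ^ j) (β ^ p ^ j) ^ (p - 1) *
          affinePolynomial (α ^ p ^ j) (β ^ p ^ j) -
        ∑ i, C (α i ^ p ^ (j + 1)) * (X i ^ p - X i) := by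
  rw [pow_sub_one_mul (expChar_pos R p).ne', affinePolynomial_pow_expChar]
  simp only [Pi.pow_apply, ← pow_mul, ← pow_succ, add_sub_cancel_right]

theorem affinePolynomial_frobeniusTwist_eq [ExpChar R p] (j : ℕ) :
    affinePolynomial (α ^ p ^ j) (β ^ p ^ j) =
      linearCofactor p α β j * affinePolynomial α β +
        ∑ i, frobeniusCofactor p α β j i * (X i ^ p - X i) := by
  induction j with
  | zero => simp [linearCofactor, frobeniusCofactor]
  | succ j ih =>
    set M := affinePolynomial (α ^ p ^ j) (β ^ p ^ j) ^ (p - 1) with hM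
    calc affinePolynomial (α ^ p ^ (j + 1)) (β ^ p ^ (j + 1))
        = M * affinePolynomial (α ^ p ^ j) (β ^ p ^ j) -
            ∑ i, C (α i ^ p ^ (j + 1)) * (X i ^ p - X i) :=
          affinePolynomial_frobeniusTwist_succ p α β j
      _ = M * (linearCofactor p α β j * affinePolynomial α β +
              ∑ i, frobeniusCofactor p α β j i * (X i ^ p - X i)) -
            ∑ i, C (α i ^ p ^ (j + 1)) * (X i ^ p - X i) := by rw [ih]
      _ = linearCofactor p α β (j + 1) * affinePolynomial α β +
            ∑ i, frobeniusCofactor p α β (j + 1) i * (X i ^ p - X i) := by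
          simp only [linearCofactor, frobeniusCofactor, ← hM, sub_mul, Finset.sum_sub_distrib,
            mul_add, Finset.mul_sum, mul_assoc, add_sub_assoc]

theorem frobenius_twist_multiple_of_linear_general [ExpChar R p] (j : ℕ) :
    ∃ (A : MvPolynomial σ R) (B : σ → MvPolynomial σ R),
      ((∑ i, C (α i ^ p ^ (j + 1)) * X i) - C (β ^ p ^ (j + 1))) =
        A * ((∑ i, C (α i) * X i) - C β) + ∑ i, B i * (X i ^ p - X i) ∧
      A.totalDegree ≤ (j + 1) * (p - 1) ∧ ∀ i, (B i).totalDegree ≤ j * (p - 1) :=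
  ⟨linearCofactor p α β (j + 1), frobeniusCofactor p α β (j + 1),
    affinePolynomial_frobeniusTwist_eq p α β (j + 1),
    totalDegree_linearCofactor_le p α β (j + 1),
    totalDegree_frobeniusCofactor_succ_le p α β j⟩

end FrobeniusTwist

/-- Each Frobenius twist `L_j = ∑ i, α i^{p^j} * x i - β^{p^j}` of
the linear polynomial `L_0 = ∑ i, α i * x i - β` is a multiple of `L_0` modulo the
ideal generated by `x i^p - x i`, with cofactors of degree at most `j(p-1)`. -/
theorem frobenius_twist_multiple_of_linear
    (p : ℕ) (hp : p.Prime) (F : Type*) [Field F] [CharP F p]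
    (n : ℕ) (α : Fin n → F) (β : F) :
    ∀ j : ℕ, 1 ≤ j →
      ∃ (A : MvPolynomial (Fin n) F) (B : Fin n → MvPolynomial (Fin n) F),
        ((∑ i, MvPolynomial.C (α i ^ p ^ j) * MvPolynomial.X i)
            - MvPolynomial.C (β ^ p ^ j)) =
          A * ((∑ i, MvPolynomial.C (α i) * MvPolynomial.X i) - MvPolynomial.C β) +
            ∑ i, B i * (MvPolynomial.X i ^ p - MvPolynomial.X i) ∧
        A.totalDegree ≤ j * (p - 1) ∧ ∀ i, (B i).totalDegree ≤ j * (p - 1) := by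
  rintro (_ | j) hj
  · contradiction
  have : ExpChar F p := .prime hp
  obtain ⟨A, B, hAB, hA, hB⟩ := frobenius_twist_multiple_of_linear_general p α β j
  exact ⟨A, B, hAB, hA, fun i => (hB i).trans (Nat.mul_le_mul_right _ j.le_succ)⟩
end

section
/- Let p be a prime, k ≥ 1, and let F be a finite field with p^k elements. Let α_1,…,α_n, β ∈ F satisfy Σ_{i=1}^n α_i a_i ≠ β for every a ∈ {0,1}^n. Then there exist polynomials A, B_1,…,B_n ∈ F[x_1,…,x_n] such that A·(Σ_{i=1}^n α_i x_i − β) + Σ_{j=1}^n B_j·(x_j² − x_j) = 1, with deg A ≤ k(p−1) and deg B_j ≤ k(p−1) + 1 for every j. -/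
/-!
At a point `a` fixed coordinatewise by Frobenius, `f(a) ^ p ^ j` is the value at `a` of the
polynomial obtained from `f` by raising only its coefficients to the power `p ^ j`, so this power
costs no degree. Since `p ^ k - 1 = (p - 1) (1 + p + ⋯ + p ^ (k - 1))`, the function
`f ^ (p ^ k - 1)` agrees at such points with a multiple `A * f` of `f` of degree at most
`k (p - 1) deg f`. Over a field with `p ^ k` elements this function is `1` wherever `f` does not
vanish, so `1 - A * f` vanishes on the cube, and the Combinatorial Nullstellensatz writes it as a
combination of the `x_j ^ 2 - x_j`.
-/

open MvPolynomial
open scoped Finset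

section FrobeniusTwistedPow

variable {σ R : Type*} [CommSemiring R]

lemma totalDegree_map_le {S : Type*} [CommSemiring S] (φ : R →+* S) (f : MvPolynomial σ R) :
    (map φ f).totalDegree ≤ f.totalDegree :=
  Finset.sup_mono (support_map_subset φ f)

variable (p : ℕ) [ExpChar R p]

lemma eval_map_iterateFrobenius {a : σ → R} (ha : ∀ i, a i ^ p = a i) (j : ℕ)
    (f : MvPolynomial σ R) :
    eval a (map (iterateFrobenius R p j) f) = eval a f ^ p ^ j := by
  have fixed : iterateFrobenius R p j ∘ a = a := by
    funext i
    rw [Function.comp_apply, coe_iterateFrobenius]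
    exact Function.iterate_fixed (ha i) j
  rw [← iterateFrobenius_def, map_eval, fixed]

/-- The product of the `(p - 1)`-st powers of the first `k` Frobenius twists of `f`, where Frobenius
acts on the coefficients only. It replaces `f ^ (p ^ k - 1)` at points fixed by Frobenius, with
degree only linear in `k`. -/
noncomputable def frobeniusTwistedPow (k : ℕ) (f : MvPolynomial σ R) : MvPolynomial σ R :=
  ∏ j ∈ Finset.range k, map (iterateFrobenius R p j) f ^ (p - 1)

lemma eval_frobeniusTwistedPow {a : σ → R} (ha : ∀ i, a i ^ p = a i) (k : ℕ)
    (f : MvPolynomial σ R) :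
    eval a (frobeniusTwistedPow p k f) = eval a f ^ (p ^ k - 1) := by
  have geom_sum : ∑ j ∈ Finset.range k, p ^ j * (p - 1) = p ^ k - 1 := by
    rw [← Finset.sum_mul, geom_sum_mul_of_one_le (expChar_pos R p)]
  simp only [frobeniusTwistedPow, map_prod, map_pow, eval_map_iterateFrobenius p ha, ← pow_mul]
  rw [Finset.prod_pow_eq_pow_sum, geom_sum]

lemma totalDegree_frobeniusTwistedPow_le (k : ℕ) (f : MvPolynomial σ R) :
    (frobeniusTwistedPow p k f).totalDegree ≤ k * (p - 1) * f.totalDegree :=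
  calc (frobeniusTwistedPow p k f).totalDegree
    _ ≤ ∑ j ∈ Finset.range k, (map (iterateFrobenius R p j) f ^ (p - 1)).totalDegree :=
      totalDegree_finsetProd _ _
    _ ≤ ∑ _j ∈ Finset.range k, (p - 1) * f.totalDegree :=
      Finset.sum_le_sum fun _ _ ↦
        (totalDegree_pow _ _).trans (Nat.mul_le_mul_left _ (totalDegree_map_le _ f))
    _ = k * (p - 1) * f.totalDegree := by
      rw [Finset.sum_const, Finset.card_range, smul_eq_mul, mul_assoc]

lemma dvd_frobeniusTwistedPow (hp : 1 < p) {k : ℕ} (hk : k ≠ 0) (f : MvPolynomial σ R) :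
    f ∣ frobeniusTwistedPow p k f := by
  have twist_zero : map (iterateFrobenius R p 0) f = f := by rw [iterateFrobenius_zero, map_id]
  calc f ∣ f ^ (p - 1) := dvd_pow_self f (Nat.sub_ne_zero_of_lt hp)
    _ = map (iterateFrobenius R p 0) f ^ (p - 1) := by rw [twist_zero]
    _ ∣ frobeniusTwistedPow p k f :=
      Finset.dvd_prod_of_mem _ (Finset.mem_range.mpr (Nat.pos_of_ne_zero hk))

end FrobeniusTwistedPow

section CommRing

variable {σ R : Type*} [CommRing R]

lemma totalDegree_sum_C_mul_X_sub_C_le [Fintype σ] (α : σ → R) (β : R) :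
    ((∑ i, C (α i) * X i) - C β).totalDegree ≤ 1 := by
  refine (totalDegree_sub_C_le _ β).trans (totalDegree_finsetSum_le fun i _ ↦ ?_)
  rw [C_mul_X_eq_monomial]
  exact (totalDegree_monomial_le _ _).trans_eq (Finsupp.sum_single_index rfl)

lemma totalDegree_X_sub_C [Nontrivial R] (i : σ) (s : R) :
    (X i - C s : MvPolynomial σ R).totalDegree = 1 := by
  rw [sub_eq_add_neg, ← C_neg, totalDegree_add_eq_left_of_totalDegree_lt] <;> simp

lemma X_sub_C_ne_zero [Nontrivial R] (i : σ) (s : R) : (X i - C s : MvPolynomial σ R) ≠ 0 :=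
  ne_of_apply_ne totalDegree (by simp [totalDegree_X_sub_C])

lemma prod_X_sub_C_ne_zero [IsDomain R] (i : σ) (S : Finset R) :
    ∏ s ∈ S, (X i - C s : MvPolynomial σ R) ≠ 0 :=
  Finset.prod_ne_zero_iff.mpr fun s _ ↦ X_sub_C_ne_zero i s

lemma totalDegree_prod_X_sub_C [IsDomain R] (i : σ) (S : Finset R) :
    (∏ s ∈ S, (X i - C s : MvPolynomial σ R)).totalDegree = #S := by
  classical
  induction S using Finset.induction_on with
  | empty => simp
  | insert s S hs ih =>
    rw [Finset.prod_insert hs, Finset.card_insert_of_notMem hs,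
      totalDegree_mul_of_isDomain (X_sub_C_ne_zero i s) (prod_X_sub_C_ne_zero i S),
      totalDegree_X_sub_C, ih, add_comm]

lemma prod_pair_zero_one_X_sub_C [Nontrivial R] [DecidableEq R] (i : σ) :
    ∏ s ∈ {0, 1}, (X i - C s : MvPolynomial σ R) = X i ^ 2 - X i := by
  rw [Finset.prod_pair zero_ne_one, C_0, C_1]
  ring

lemma exists_eq_sum_mul_prod_X_sub_C [Fintype σ] [IsDomain R] {S : σ → Finset R}
    (hS : ∀ i, (S i).Nonempty) {f : MvPolynomial σ R}
    (hf : ∀ a : σ → R, (∀ i, a i ∈ S i) → eval a f = 0) :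
    ∃ B : σ → MvPolynomial σ R,
      f = ∑ j, B j * ∏ s ∈ S j, (X j - C s) ∧
        ∀ j, (B j).totalDegree ≤ f.totalDegree - #(S j) := by
  obtain ⟨B, degree_le, f_eq⟩ := combinatorial_nullstellensatz_exists_linearCombination S hS f hf
  refine ⟨B, ?_, fun j ↦ ?_⟩
  · rwa [Finsupp.linearCombination_apply, Finsupp.sum_fintype _ _ (by simp)] at f_eq
  · by_cases hB : B j = 0
    · simp [hB]
    · have degree_add_le := degree_le j
      rw [totalDegree_mul_of_isDomain (prod_X_sub_C_ne_zero j (S j)) hB,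
        totalDegree_prod_X_sub_C] at degree_add_le
      exact Nat.le_sub_of_add_le' degree_add_le

theorem nullstellensatz_certificate_degree_upper_bound_general [Fintype σ] [IsDomain R]
    {p : ℕ} [Fact p.Prime] [CharP R p] {k : ℕ} (hk : k ≠ 0) {S : σ → Finset R}
    (hS : ∀ i, (S i).Nonempty) (hfixed : ∀ i, ∀ s ∈ S i, s ^ p = s) {f : MvPolynomial σ R}
    (hf : ∀ a : σ → R, (∀ i, a i ∈ S i) → eval a f ^ (p ^ k - 1) = 1) :
    ∃ (A : MvPolynomial σ R) (B : σ → MvPolynomial σ R),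
      A * f + ∑ j, B j * ∏ s ∈ S j, (X j - C s) = 1 ∧
      A.totalDegree ≤ (k * (p - 1) - 1) * f.totalDegree ∧
      ∀ j, (B j).totalDegree ≤ k * (p - 1) * f.totalDegree - #(S j) := by
  have eval_eq_one (a : σ → R) (ha : ∀ i, a i ∈ S i) :
      eval a (frobeniusTwistedPow p k f) = 1 := by
    rw [eval_frobeniusTwistedPow p (fun i ↦ hfixed i _ (ha i)), hf a ha]
  have degree_le := totalDegree_frobeniusTwistedPow_le p k f
  obtain ⟨A, hA⟩ := dvd_frobeniusTwistedPow p (Fact.out : p.Prime).one_lt hk f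
  rw [hA, mul_comm f A] at degree_le
  simp only [hA, mul_comm f A] at eval_eq_one
  have product_ne_zero : A * f ≠ 0 := by
    choose a ha using hS
    exact ne_of_apply_ne (eval a) (by rw [eval_eq_one a ha, map_zero]; exact one_ne_zero)
  obtain ⟨B, hB, hBdeg⟩ := exists_eq_sum_mul_prod_X_sub_C (f := 1 - A * f) hS fun a ha ↦ by
    rw [map_sub, map_one, eval_eq_one a ha, sub_self]
  have sub_degree_le : (1 - A * f).totalDegree ≤ k * (p - 1) * f.totalDegree :=
    (totalDegree_sub 1 (A * f)).trans (by simpa using degree_le)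
  refine ⟨A, B, by rw [← hB, add_sub_cancel], ?_,
    fun j ↦ (hBdeg j).trans (Nat.sub_le_sub_right sub_degree_le _)⟩
  rw [totalDegree_mul_of_isDomain (left_ne_zero_of_mul product_ne_zero)
    (right_ne_zero_of_mul product_ne_zero)] at degree_le
  rw [Nat.sub_one_mul]
  exact Nat.le_sub_of_add_le degree_le

end CommRing

/-- Degree-`O(kp)` Nullstellensatz certificate for a degree-1
polynomial over `F = F_{p^k}` that is unsatisfiable over the Boolean cube:
there exist `A, B_1, …, B_n` with
`A·(∑ i, α i x i - β) + ∑ j, B j·(x j² - x j) = 1`, `deg A ≤ k(p-1)` and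
`deg (B j) ≤ k(p-1) + 1`. -/
theorem nullstellensatz_certificate_degree_upper_bound
    (p : ℕ) (hp : p.Prime) (k : ℕ) (hk : 1 ≤ k)
    (F : Type*) [Field F] [Fintype F] (hcard : Fintype.card F = p ^ k)
    (n : ℕ) (α : Fin n → F) (β : F)
    (hunsat : ∀ a : Fin n → F, (∀ i, a i = 0 ∨ a i = 1) → (∑ i, α i * a i) ≠ β) :
    ∃ (A : MvPolynomial (Fin n) F) (B : Fin n → MvPolynomial (Fin n) F),
      A * ((∑ i, MvPolynomial.C (α i) * MvPolynomial.X i) - MvPolynomial.C β) +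
          ∑ j, B j * (MvPolynomial.X j ^ 2 - MvPolynomial.X j) = 1 ∧
      A.totalDegree ≤ k * (p - 1) ∧ ∀ j, (B j).totalDegree ≤ k * (p - 1) + 1 := by
  classical
  have : Fact p.Prime := ⟨hp⟩
  have : CharP F p := charP_of_card_eq_prime_pow hcard
  have pow_eq_one (a : Fin n → F) (ha : ∀ i, a i ∈ ({0, 1} : Finset F)) :
      eval a ((∑ i, C (α i) * X i) - C β) ^ (p ^ k - 1) = 1 := by
    rw [← hcard]
    refine FiniteField.pow_card_sub_one_eq_one _ ?_
    simpa [sub_eq_zero] using hunsat a (by simpa using ha)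
  obtain ⟨A, B, certificate, hA, hB⟩ := nullstellensatz_certificate_degree_upper_bound_general
    (Nat.one_le_iff_ne_zero.mp hk) (fun _ ↦ Finset.insert_nonempty 0 {1})
    (by simp [hp.ne_zero]) pow_eq_one
  simp only [prod_pair_zero_one_X_sub_C] at certificate
  have degree_le_one := totalDegree_sum_C_mul_X_sub_C_le α β
  refine ⟨A, B, certificate, ?_, fun j ↦ ?_⟩
  · grw [hA, degree_le_one]
    lia
  · grw [hB j, degree_le_one]
    lia
end

section
/- Let p be a prime, F a field of characteristic p, n ≥ 1, and let r = ⌊log_p n⌋ + 1 (so that p^{r−1} ≤ n < p^r). Let f ∈ F[x_1,…,x_n] be a multilinear symmetric polynomial. Then there exists a polynomial G ∈ F[y_0,…,y_{r−1}] in r variables such that f(a) = G(e_{p^0}(a), e_{p^1}(a), …, e_{p^{r−1}}(a)) for every a ∈ {0,1}^n. -/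
/-!
By Lucas' theorem, `w.choose (p ^ t)` is congruent mod `p` to the `t`-th base-`p` digit of `w`.
At a Boolean point of weight `w`, the polynomial `e_{p ^ t}` takes the value `w.choose (p ^ t)`, so
the values of `e_{p ^ 0}, …, e_{p ^ (r - 1)}` determine every weight `w < p ^ r`. A symmetric
function on the cube depends only on the weight, and interpolating over the finitely many digit
vectors in `𝔽_p ^ r` writes it as a polynomial in these values.
-/

open Finset MvPolynomial

section Digits

variable {p : ℕ} [Fact p.Prime]

lemma choose_prime_pow_modEq_div_pow (w t : ℕ) : w.choose (p ^ t) ≡ w / p ^ t [MOD p] := by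
  induction t generalizing w with
  | zero => simp [Nat.ModEq.refl]
  | succ t ih =>
    have hp := (Fact.out : p.Prime).pos
    calc w.choose (p ^ (t + 1))
      _ ≡ (w % p).choose (p ^ (t + 1) % p) * (w / p).choose (p ^ (t + 1) / p) [MOD p] :=
        Choose.choose_modEq_choose_mod_mul_choose_div_nat
      _ = (w / p).choose (p ^ t) := by simp [pow_succ, hp]
      _ ≡ w / p / p ^ t [MOD p] := ih (w / p)
      _ = w / p ^ (t + 1) := by rw [Nat.div_div_eq_div_mul, pow_succ']

lemma injOn_choose_prime_pow (r : ℕ) :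
    Set.InjOn (fun (w : ℕ) (t : Fin r) ↦ (w.choose (p ^ (t : ℕ)) : ZMod p)) (Set.Iio (p ^ r)) := by
  intro v hv w hw h
  have digits_eq (t : Fin r) : v / p ^ (t : ℕ) % p = w / p ^ (t : ℕ) % p :=
    calc v / p ^ (t : ℕ) % p
      _ = v.choose (p ^ (t : ℕ)) % p := (choose_prime_pow_modEq_div_pow v t).symm
      _ = w.choose (p ^ (t : ℕ)) % p := (ZMod.natCast_eq_natCast_iff' _ _ _).1 (congrFun h t)
      _ = w / p ^ (t : ℕ) % p := choose_prime_pow_modEq_div_pow w t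
  have : (⟨v, hv⟩ : Fin (p ^ r)) = ⟨w, hw⟩ :=
    finFunctionFinEquiv.symm.injective (funext fun t ↦ Fin.ext (digits_eq t))
  exact Fin.mk.inj this

end Digits

lemma exists_eval_ringHom_comp_eq {σ K R : Type*} [Finite σ] [Field K] [Finite K] [CommSemiring R]
    (φ : K →+* R) (g : (σ → K) → R) :
    ∃ G : MvPolynomial σ R, ∀ v : σ → K, eval (φ ∘ v) G = g v := by
  classical
  have := Fintype.ofFinite σ
  have := Fintype.ofFinite K
  have eval_indicator (v c : σ → K) :
      eval (φ ∘ v) (map φ (indicator c)) = if c = v then 1 else 0 := by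
    rw [eval_map, ← eval₂_comp]
    split_ifs with h
    · rw [h, eval_indicator_apply_eq_one, map_one]
    · rw [eval_indicator_apply_eq_zero _ _ (Ne.symm h), map_zero]
  exact ⟨∑ c, C (g c) * map φ (indicator c), fun v ↦ by simp [eval_indicator]⟩

lemma exists_eval_choose_prime_pow_eq (p : ℕ) [Fact p.Prime] {R : Type*} [CommRing R] [CharP R p]
    (r : ℕ) (g : ℕ → R) :
    ∃ G : MvPolynomial (Fin r) R, ∀ w < p ^ r,
      eval (fun t : Fin r ↦ (w.choose (p ^ (t : ℕ)) : R)) G = g w := by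
  let residues (w : ℕ) (t : Fin r) : ZMod p := w.choose (p ^ (t : ℕ))
  obtain ⟨G, hG⟩ := exists_eval_ringHom_comp_eq (ZMod.castHom dvd_rfl R)
    (g ∘ Function.invFunOn residues (Set.Iio (p ^ r)))
  refine ⟨G, fun w hw ↦ ?_⟩
  calc eval (fun t : Fin r ↦ (w.choose (p ^ (t : ℕ)) : R)) G
    _ = eval (ZMod.castHom dvd_rfl R ∘ residues w) G := by
      simp only [residues, Function.comp_def, map_natCast]
    _ = g (Function.invFunOn residues (Set.Iio (p ^ r)) (residues w)) := hG _
    _ = g w := by rw [(injOn_choose_prime_pow r).leftInvOn_invFunOn hw]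

section BooleanCube

open scoped Pointwise

variable {σ R : Type*}

lemma exists_eq_indicator_one [Finite σ] [Zero R] [One R] {a : σ → R}
    (ha : ∀ i, a i = 0 ∨ a i = 1) : ∃ S : Finset σ, a = (S : Set σ).indicator 1 := by
  classical
  have := Fintype.ofFinite σ
  refine ⟨univ.filter (a · = 1), funext fun i ↦ ?_⟩
  by_cases h : a i = 1
  · simp [h]
  · simpa [h] using (ha i).resolve_right h

lemma eval_indicator_one_esymm [Fintype σ] [CommSemiring R] (S : Finset σ) (k : ℕ) :
    eval ((S : Set σ).indicator 1) (esymm σ R k) = ((#S).choose k : R) := by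
  classical
  have prod_indicator (T : Finset σ) :
      ∏ i ∈ T, (S : Set σ).indicator (1 : σ → R) i = if T ⊆ S then 1 else 0 := by
    simp only [Set.indicator_apply, mem_coe, Pi.one_apply, prod_ite_zero, prod_const_one,
      subset_iff]
  have filter_subset : {T ∈ powersetCard k (univ : Finset σ) | T ⊆ S} = powersetCard k S := by
    ext T
    simp [mem_powersetCard, and_comm]
  simp only [esymm, map_sum, map_prod, eval_X, prod_indicator, sum_boole, filter_subset,
    card_powersetCard]

lemma exists_perm_smul_eq_of_card_eq [DecidableEq σ] {S T : Finset σ} (h : #S = #T) :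
    ∃ π : Equiv.Perm σ, π • S = T := by
  have := Set.powersetCard.isPretransitive (α := σ) (n := #T)
  obtain ⟨π, hπ⟩ := MulAction.exists_smul_eq (Equiv.Perm σ)
    (⟨S, h⟩ : Set.powersetCard σ #T) ⟨T, rfl⟩
  exact ⟨π, congrArg Subtype.val hπ⟩

lemma exists_apply_indicator_one_eq_card [Zero R] [One R] {β : Type*} [Nonempty β]
    {f : (σ → R) → β}
    (hf : ∀ (π : Equiv.Perm σ) (a : σ → R), (∀ i, a i = 0 ∨ a i = 1) → f (a ∘ π) = f a) :
    ∃ g : ℕ → β, ∀ S : Finset σ, f ((S : Set σ).indicator 1) = g #S := by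
  classical
  have factors : Function.FactorsThrough (fun S : Finset σ ↦ f ((S : Set σ).indicator 1)) card := by
    intro S T h
    obtain ⟨π, rfl⟩ := exists_perm_smul_eq_of_card_eq h
    have comp_perm :
        ((π • S : Finset σ) : Set σ).indicator (1 : σ → R) ∘ π = (S : Set σ).indicator 1 := by
      ext i
      simp [Set.indicator_apply, ← Equiv.Perm.smul_def, Set.smul_mem_smul_set_iff]
    calc f ((S : Set σ).indicator 1)
      _ = f (((π • S : Finset σ) : Set σ).indicator 1 ∘ π) := by rw [comp_perm]
      _ = f (((π • S : Finset σ) : Set σ).indicator 1) :=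
        hf π _ fun _ ↦ Set.indicator_eq_zero_or_self _ _ _
  obtain ⟨g, hg⟩ := (Function.factorsThrough_iff _).1 factors
  exact ⟨g, congrFun hg⟩

end BooleanCube

theorem symmetric_function_of_p_power_esymms_general (p : ℕ) [Fact p.Prime]
    {σ R : Type*} [Fintype σ] [CommRing R] [CharP R p] (r : ℕ) (hr : Fintype.card σ < p ^ r)
    {f : (σ → R) → R}
    (hf : ∀ (π : Equiv.Perm σ) (a : σ → R), (∀ i, a i = 0 ∨ a i = 1) → f (a ∘ π) = f a) :
    ∃ G : MvPolynomial (Fin r) R, ∀ a : σ → R, (∀ i, a i = 0 ∨ a i = 1) →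
      f a = eval (fun t : Fin r ↦ eval a (esymm σ R (p ^ (t : ℕ)))) G := by
  obtain ⟨g, hg⟩ := exists_apply_indicator_one_eq_card hf
  obtain ⟨G, hG⟩ := exists_eval_choose_prime_pow_eq p r g
  refine ⟨G, fun a ha ↦ ?_⟩
  obtain ⟨S, rfl⟩ := exists_eq_indicator_one ha
  simp only [eval_indicator_one_esymm]
  rw [hg, hG _ (S.card_le_univ.trans_lt hr)]

/-- Over a field of characteristic `p`, every multilinear symmetric
polynomial in `n ≥ 1` variables agrees, on the Boolean cube, with a polynomial `G` in
the `r = ⌊log_p n⌋ + 1` elementary symmetric polynomials of `p`-power degree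
`e_{p^0}, e_{p^1}, …, e_{p^{r-1}}`. -/
theorem symmetric_function_of_p_power_esymms
    (p : ℕ) (hp : p.Prime) (F : Type*) [Field F] [CharP F p]
    (n : ℕ) (hn : 1 ≤ n)
    (f : MvPolynomial (Fin n) F) (hml : ∀ i, f.degreeOf i ≤ 1)
    (hsym : f.IsSymmetric) :
    ∃ G : MvPolynomial (Fin (Nat.log p n + 1)) F,
      ∀ a : Fin n → F, (∀ i, a i = 0 ∨ a i = 1) →
        MvPolynomial.eval a f =
          MvPolynomial.eval
            (fun t : Fin (Nat.log p n + 1) =>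
              MvPolynomial.eval a (MvPolynomial.esymm (Fin n) F (p ^ (t : ℕ)))) G := by
  have := Fact.mk hp
  exact symmetric_function_of_p_power_esymms_general p (Nat.log p n + 1)
    (by simpa using Nat.lt_pow_succ_log_self hp.one_lt n)
    fun π a _ ↦ by rw [← eval_rename, hsym π]
end

section
/- Let F be a field, n ≥ 1, and 1 ≤ a, b ≤ n. Then there exist scalars c_1,…,c_n ∈ F and polynomials R_1,…,R_n ∈ F[x_1,…,x_n] such that e_a(x)·e_b(x) = Σ_{i=1}^n c_i·e_i(x) + Σ_{j=1}^n R_j(x)·(x_j² − x_j). In particular, e_a(v)·e_b(v) = Σ_{i=1}^n c_i·e_i(v) for every v ∈ {0,1}^n; that is, the multilinearization of a product of two elementary symmetric polynomials is an F-linear combination of elementary symmetric polynomials. -/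
/-!
Modulo `x j ^ 2 - x j` the variables are idempotent, so the monomials of `S` and `T` multiply to the
monomial of `S ∪ T`. Hence `e_a * e_b` is the sum over all `U` of the monomial of `U`, weighted by
the number of pairs `(S, T)` with `#S = a`, `#T = b` and `S ∪ T = U`. This number depends only on
the cardinality of `U`: passing from `T` to `U \ T`, it counts the chains `U \ T ⊆ S ⊆ U`.
-/

open Finset

/-- The number of ways to write a `k`-element set as the union of an `a`-element and a `b`-element
subset; it is the coefficient of `e_k` in the multilinearization of `e_a * e_b`. The case `k < b` is
separate because of the truncated subtraction `k - b`. -/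
def coverCount (a b k : ℕ) : ℕ :=
  if b ≤ k then k.choose a * a.choose (k - b) else 0

section Counting

variable {ι : Type*} [DecidableEq ι]

theorem card_filter_powersetCard_union_eq {S U : Finset ι} (hSU : S ⊆ U) {b : ℕ} (hb : b ≤ #U) :
    #{T ∈ U.powersetCard b | S ∪ T = U} = (#S).choose (#U - b) := by
  rw [← card_powersetCard]
  refine card_nbij' (U \ ·) (U \ ·) (fun T hT ↦ ?_) (fun D hD ↦ ?_) (fun T hT ↦ ?_) fun D hD ↦ ?_
  · obtain ⟨⟨hTU, rfl⟩, hST⟩ : (T ⊆ U ∧ #T = b) ∧ S ∪ T = U := by simpa using hT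
    have hDS : U \ T ⊆ S := by grind
    simpa [card_sdiff_of_subset hTU] using hDS
  · obtain ⟨hDS, hD⟩ : D ⊆ S ∧ #D = #U - b := by simpa using hD
    have hcard : #(U \ D) = b := by rw [card_sdiff_of_subset (hDS.trans hSU), hD]; omega
    have hunion : S ∪ U \ D = U := by grind
    simpa [hcard] using hunion
  · have hTU : T ⊆ U := by grind
    exact Finset.sdiff_sdiff_eq_self hTU
  · have hDS : D ⊆ S := by grind
    exact Finset.sdiff_sdiff_eq_self (hDS.trans hSU)

theorem card_filter_powersetCard_product_union_eq {s U : Finset ι} (hU : U ⊆ s) (a b : ℕ) :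
    #{p ∈ s.powersetCard a ×ˢ s.powersetCard b | p.1 ∪ p.2 = U} = coverCount a b #U := by
  have hrestrict : {p ∈ s.powersetCard a ×ˢ s.powersetCard b | p.1 ∪ p.2 = U} =
      {p ∈ U.powersetCard a ×ˢ U.powersetCard b | p.1 ∪ p.2 = U} := by
    grind
  rw [hrestrict, card_filter, sum_product, coverCount]
  simp only [← card_filter]
  split_ifs with hb
  · calc
      ∑ S ∈ U.powersetCard a, #{T ∈ U.powersetCard b | S ∪ T = U}
          = ∑ _S ∈ U.powersetCard a, a.choose (#U - b) := by
        refine sum_congr rfl fun S hS ↦ ?_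
        obtain ⟨hSU, rfl⟩ := mem_powersetCard.1 hS
        exact card_filter_powersetCard_union_eq hSU hb
      _ = (#U).choose a * a.choose (#U - b) := by simp
  · simp [powersetCard_eq_empty.2 (not_le.1 hb)]

end Counting

section Idempotent

variable {ι A : Type*}

theorem prod_mul_prod_eq_prod_union_of_isIdempotentElem [DecidableEq ι] [CommMonoid A] {x : ι → A}
    {S T : Finset ι} (hx : ∀ i ∈ S ∩ T, IsIdempotentElem (x i)) :
    (∏ i ∈ S, x i) * ∏ i ∈ T, x i = ∏ i ∈ S ∪ T, x i := by
  have hinter : S ∩ T ⊆ S ∪ T := inter_subset_left.trans subset_union_left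
  rw [← prod_union_inter, ← prod_sdiff hinter, mul_assoc, ← prod_mul_distrib,
    prod_congr rfl fun i hi ↦ (hx i hi).eq]

theorem multiset_esymm_mul_esymm_of_isIdempotentElem [CommSemiring A] {x : ι → A} {s : Finset ι}
    (hx : ∀ i ∈ s, IsIdempotentElem (x i)) (a b : ℕ) :
    (s.val.map x).esymm a * (s.val.map x).esymm b =
      ∑ k ∈ range (#s + 1), (coverCount a b k : A) * (s.val.map x).esymm k := by
  classical
  simp only [esymm_map_val]
  calc
    (∑ S ∈ s.powersetCard a, ∏ i ∈ S, x i) * ∑ T ∈ s.powersetCard b, ∏ i ∈ T, x i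
        = ∑ p ∈ s.powersetCard a ×ˢ s.powersetCard b, ∏ i ∈ p.1 ∪ p.2, x i := by
      rw [sum_mul_sum, ← sum_product']
      refine sum_congr rfl fun p hp ↦ prod_mul_prod_eq_prod_union_of_isIdempotentElem ?_
      exact fun i hi ↦ hx i (by grind)
    _ = ∑ U ∈ s.powerset, ∑ p ∈ s.powersetCard a ×ˢ s.powersetCard b with p.1 ∪ p.2 = U,
          ∏ i ∈ p.1 ∪ p.2, x i :=
      (sum_fiberwise_of_maps_to (by grind) _).symm
    _ = ∑ U ∈ s.powerset, (coverCount a b #U : A) * ∏ i ∈ U, x i := by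
      refine sum_congr rfl fun U hU ↦ ?_
      rw [← card_filter_powersetCard_product_union_eq (mem_powerset.1 hU), ← nsmul_eq_mul,
        ← sum_const]
      exact sum_congr rfl fun p hp ↦ by rw [(mem_filter.1 hp).2]
    _ = ∑ k ∈ range (#s + 1), (coverCount a b k : A) * ∑ U ∈ s.powersetCard k, ∏ i ∈ U, x i := by
      simp only [sum_powerset, mul_sum]
      refine sum_congr rfl fun k _ ↦ sum_congr rfl fun U hU ↦ ?_
      rw [(mem_powersetCard.1 hU).2]

end Idempotent

section ElementarySymmetric

open MvPolynomial

variable {σ R : Type*} [Fintype σ]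

theorem map_esymm_mul_map_esymm_of_isIdempotentElem [CommSemiring R] {A : Type*} [CommSemiring A]
    (φ : MvPolynomial σ R →+* A) (hφ : ∀ i, IsIdempotentElem (φ (X i)))
    (a : ℕ) {b : ℕ} (hb : 1 ≤ b) :
    φ (esymm σ R a) * φ (esymm σ R b) =
      ∑ k ∈ Icc 1 (Fintype.card σ), (coverCount a b k : A) * φ (esymm σ R k) := by
  have map_esymm (k : ℕ) :
      φ (esymm σ R k) = ((univ : Finset σ).val.map fun i ↦ φ (X i)).esymm k := by
    simp only [esymm, esymm_map_val, map_sum, map_prod]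
  have hzero : coverCount a b 0 = 0 := if_neg (by omega)
  simp only [map_esymm]
  rw [multiset_esymm_mul_esymm_of_isIdempotentElem fun i _ ↦ hφ i, card_univ, range_eq_Ico,
    sum_eq_sum_Ico_succ_bot (Nat.add_one_pos _), hzero, Nat.cast_zero, zero_mul, zero_add, zero_add,
    Ico_add_one_right_eq_Icc]

theorem multilinearization_product_two_esymm_general [CommRing R] (a : ℕ) {b : ℕ} (hb : 1 ≤ b) :
    ∃ Q : σ → MvPolynomial σ R,
      (esymm σ R a * esymm σ R b =
        (∑ k ∈ Icc 1 (Fintype.card σ), C (coverCount a b k : R) * esymm σ R k) +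
          ∑ j, Q j * (X j ^ 2 - X j)) ∧
      ∀ v : σ → R, (∀ i, IsIdempotentElem (v i)) →
        eval v (esymm σ R a) * eval v (esymm σ R b) =
          ∑ k ∈ Icc 1 (Fintype.card σ), (coverCount a b k : R) * eval v (esymm σ R k) := by
  let I : Ideal (MvPolynomial σ R) := Ideal.span (Set.range fun j ↦ X j ^ 2 - X j)
  have hX (i : σ) : IsIdempotentElem (Ideal.Quotient.mk I (X i)) := by
    rw [IsIdempotentElem, ← map_mul, ← sq, Ideal.Quotient.eq]
    exact Ideal.subset_span ⟨i, rfl⟩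
  have hmk : Ideal.Quotient.mk I (esymm σ R a * esymm σ R b) = Ideal.Quotient.mk I
      (∑ k ∈ Icc 1 (Fintype.card σ), C (coverCount a b k : R) * esymm σ R k) := by
    simpa using map_esymm_mul_map_esymm_of_isIdempotentElem (Ideal.Quotient.mk I) hX a hb
  obtain ⟨Q, hQ⟩ := Ideal.mem_span_range_iff_exists_fun.1 (Ideal.Quotient.eq.1 hmk)
  exact ⟨Q, by rw [hQ, add_sub_cancel], fun v hv ↦
    map_esymm_mul_map_esymm_of_isIdempotentElem (eval v) (by simpa using hv) a hb⟩

end ElementarySymmetric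

/-- The product of two elementary symmetric polynomials `e_a · e_b`
(for `1 ≤ a, b ≤ n`) equals an `F`-linear combination of `e_1, …, e_n` modulo the
Boolean axioms `x j² - x j`; in particular its multilinearization is such a linear
combination, i.e. the identity holds at every point of `{0,1}^n`. -/
theorem multilinearization_product_two_esymm
    (F : Type*) [Field F] (n : ℕ) (hn : 1 ≤ n)
    (a b : ℕ) (ha : 1 ≤ a) (ha' : a ≤ n) (hb : 1 ≤ b) (hb' : b ≤ n) :
    ∃ (c : ℕ → F) (R : Fin n → MvPolynomial (Fin n) F),
      (MvPolynomial.esymm (Fin n) F a * MvPolynomial.esymm (Fin n) F b =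
        (∑ i ∈ Finset.Icc 1 n, MvPolynomial.C (c i) * MvPolynomial.esymm (Fin n) F i) +
          ∑ j, R j * (MvPolynomial.X j ^ 2 - MvPolynomial.X j)) ∧
      ∀ v : Fin n → F, (∀ i, v i = 0 ∨ v i = 1) →
        MvPolynomial.eval v (MvPolynomial.esymm (Fin n) F a) *
            MvPolynomial.eval v (MvPolynomial.esymm (Fin n) F b) =
          ∑ i ∈ Finset.Icc 1 n, c i * MvPolynomial.eval v (MvPolynomial.esymm (Fin n) F i) := by
  refine ⟨fun k ↦ coverCount a b k, ?_⟩
  simpa [IsIdempotentElem.iff_eq_zero_or_one] using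
    multilinearization_product_two_esymm_general (σ := Fin n) (R := F) a hb
end
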